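/- arXiv:2407.16262 — 3 statements merged into one kernel-verified Lean document; each statement's English description precedes it below -/
import Mathlib

section
/- (Ergodicity of the orthogonal skew product.) Let h_1,...,h_n ∈ O(ℝ^d) and let G be the closure of the subgroup they generate, with normalized Haar measure λ_G. Let p = (p_1,...,p_n) be a strictly positive probability vector, let 𝒜 = {1,...,n}, let p^ℕ be the Bernoulli measure on 𝒜^ℕ, and let σ be the left shift. Then the skew product F : 𝒜^ℕ × G → 𝒜^ℕ × G defined by F(ω, g) = (σω, h_{ω₁}·g) preserves the measure p^ℕ × λ_G, and the measure-preserving system (𝒜^ℕ × G, F, p^ℕ × λ_G) is ergodic. -/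
/-!
Let `P = μ × λ` and let `A` be an `F`-invariant measurable set. Invariance of `P` and everything
about `A` follow from one identity: restricted to the cylinder `{ω | ω 0 = i}`, the map `F` pushes
`P` to `pᵢ P` (`map_restrict_skew`).

The fibre mass `φ g = μ {ω | (ω, g) ∈ A}` satisfies `φ g = ∑ pᵢ φ (hᵢ g)` pointwise. As `λ` is
left-invariant, `∫ ∑ pᵢ (φ (hᵢ g) - φ g)² dλ = 0`, so `φ ∘ hᵢ = φ` almost everywhere
(`ae_eq_of_harmonic`). Hence the measure `ν = φ λ`, the projection to `G` of `P` restricted to `A`,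
is invariant under each `hᵢ`. The elements of `G` preserving `ν` form a closed subgroup, so `ν` is
invariant under all of `G`, and uniqueness of Haar measure gives `ν = c λ`
(`exists_eq_smul_of_invariant`).

Iterating the first identity along a word gives `P (A ∩ (C × B)) = c μ(C) λ(B)` for every cylinder
`C` and measurable `B`. Thus `P` restricted to `A` is `c P`, and evaluating on the complement of `A`
yields `c = 0` or `P Aᶜ = 0`.
-/

open MeasureTheory Metric Set Filter
open scoped ENNReal Topology

/-- Borel measurable structure on a subgroup of the orthogonal group. -/
noncomputable instance {d : ℕ} (G : Subgroup (Matrix.orthogonalGroup (Fin d) ℝ)) :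
    MeasurableSpace G := borel G

/-! ### The Bernoulli shift -/

lemma measurableSet_coord {n : ℕ} (k : ℕ) (i : Fin n) :
    MeasurableSet {ω : ℕ → Fin n | ω k = i} :=
  measurableSet_eq_fun (measurable_pi_apply k) measurable_const

lemma measurableSet_cyl {n : ℕ} (m : ℕ) (w : Fin m → Fin n) :
    MeasurableSet {ω : ℕ → Fin n | ∀ i : Fin m, ω (i : ℕ) = w i} := by
  rw [ofPred_forall]
  exact MeasurableSet.iInter fun i => measurableSet_coord i (w i)

/-- Finite measures on sequence space agreeing on all initial cylinders are equal. -/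
lemma ext_of_cylinder {n : ℕ} (μ ν : Measure (ℕ → Fin n)) [IsFiniteMeasure μ]
    (hμν : ∀ (m : ℕ) (w : Fin m → Fin n),
      μ {ω | ∀ i : Fin m, ω (i : ℕ) = w i} = ν {ω | ∀ i : Fin m, ω (i : ℕ) = w i}) :
    μ = ν := by
  refine ext_of_generate_finite
    {s | ∃ (m : ℕ) (w : Fin m → Fin n), s = {ω | ∀ i : Fin m, ω (i : ℕ) = w i}} ?_ ?_ ?_ ?_
  · apply le_antisymm
    · refine iSup_le fun k => ?_
      rw [← measurable_iff_comap_le]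
      refine @measurable_to_countable' _ _ _ _ (MeasurableSpace.generateFrom _) _ fun a => ?_
      -- `{ω | ω k = a}` is the union of the cylinders of length `k + 1` whose last letter is `a`
      have : (fun ω : ℕ → Fin n => ω k) ⁻¹' {a} =
          ⋃ w ∈ {w : Fin (k + 1) → Fin n | w (Fin.last k) = a},
            {ω | ∀ i : Fin (k + 1), ω (i : ℕ) = w i} := by
        ext ω
        simp only [mem_preimage, mem_singleton_iff, mem_ofPred_eq, mem_iUnion, exists_prop]
        constructor
        · intro hω
          exact ⟨fun i => ω i, by simpa using hω, fun i => rfl⟩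
        · rintro ⟨w, hw, hω⟩
          rw [← hw, ← hω]
          rfl
      rw [this]
      refine @MeasurableSet.biUnion _ _ (MeasurableSpace.generateFrom _) _ _ (to_countable _)
        fun w _ => ?_
      exact MeasurableSpace.measurableSet_generateFrom ⟨_, w, rfl⟩
    · refine MeasurableSpace.generateFrom_le ?_
      rintro _ ⟨m, w, rfl⟩
      exact measurableSet_cyl m w
  · rintro _ ⟨m, w, rfl⟩ _ ⟨m', w', rfl⟩ ⟨ω₀, h1, h2⟩
    -- two cylinders that meet are nested, so their intersection is the longer one
    refine ⟨max m m', fun i => ω₀ i, ?_⟩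
    ext ω
    simp only [mem_inter_iff, mem_ofPred_eq] at *
    constructor
    · rintro ⟨h3, h4⟩ ⟨i, hi⟩
      rcases lt_max_iff.1 hi with hi | hi
      · exact (h3 ⟨i, hi⟩).trans (h1 ⟨i, hi⟩).symm
      · exact (h4 ⟨i, hi⟩).trans (h2 ⟨i, hi⟩).symm
    · intro h3
      exact ⟨fun i => (h3 ⟨i, lt_max_of_lt_left i.2⟩).trans (h1 i),
        fun i => (h3 ⟨i, lt_max_of_lt_right i.2⟩).trans (h2 i)⟩
  · rintro _ ⟨m, w, rfl⟩
    exact hμν m w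
  · simpa using hμν 0 Fin.elim0

lemma cyl_succ {n : ℕ} (m : ℕ) (w : Fin (m + 1) → Fin n) :
    {ω : ℕ → Fin n | ∀ i : Fin (m + 1), ω (i : ℕ) = w i} =
      {ω | ω 0 = w 0} ∩ (fun ω j => ω (j + 1)) ⁻¹' {ω | ∀ i : Fin m, ω (i : ℕ) = w i.succ} := by
  ext ω
  simp [Fin.forall_fin_succ]

lemma measurable_shift {n : ℕ} : Measurable (fun (ω : ℕ → Fin n) (j : ℕ) => ω (j + 1)) :=
  measurable_pi_lambda _ fun j => measurable_pi_apply (j + 1)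

lemma measurableSet_first {n : ℕ} (i : Fin n) : MeasurableSet {ω : ℕ → Fin n | ω 0 = i} :=
  measurableSet_coord 0 i

/-- The shift pushes the Bernoulli measure restricted to `{ω | ω 0 = i}` to `q i` times itself. -/
lemma map_restrict_shift {n : ℕ} (q : Fin n → ℝ≥0∞)
    (μ : Measure (ℕ → Fin n)) [IsProbabilityMeasure μ]
    (hcyl : ∀ (m : ℕ) (w : Fin m → Fin n),
      μ {ω | ∀ i : Fin m, ω (i : ℕ) = w i} = ∏ i, q (w i)) (i : Fin n) :
    (μ.restrict {ω | ω 0 = i}).map (fun ω j => ω (j + 1)) = q i • μ := by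
  have := Measure.isFiniteMeasure_map (μ.restrict {ω : ℕ → Fin n | ω 0 = i})
    (fun ω j => ω (j + 1))
  refine ext_of_cylinder _ _ fun m w => ?_
  rw [Measure.map_apply measurable_shift (measurableSet_cyl m w),
    Measure.restrict_apply (measurable_shift (measurableSet_cyl m w)), inter_comm]
  have h1 := cyl_succ m (Fin.cons i w)
  have h2 := hcyl (m + 1) (Fin.cons i w)
  simp only [Fin.cons_zero, Fin.cons_succ] at h1
  rw [← h1, h2, Fin.prod_univ_succ]
  simp [hcyl]

/-! ### Skew products over the Bernoulli shift -/

section Skew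

set_option linter.unusedSectionVars false

variable {n : ℕ} {G : Type*} [Group G] [TopologicalSpace G] [IsTopologicalGroup G]
  [SecondCountableTopology G] [MeasurableSpace G] [BorelSpace G]

/-- The skew product `(ω, g) ↦ (σ ω, h_{ω₀} g)` over the one-sided full shift. -/
def skew (h : Fin n → G) (x : (ℕ → Fin n) × G) : (ℕ → Fin n) × G :=
  (fun j => x.1 (j + 1), h (x.1 0) * x.2)

lemma measurable_skew (h : Fin n → G) : Measurable (skew h) := by
  refine (measurable_shift.comp measurable_fst).prodMk ?_
  have h1 : Measurable fun y : Fin n × G => h y.1 * y.2 :=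
    measurable_from_prod_countable_right fun i => measurable_const_mul (h i)
  have h2 : Measurable fun x : (ℕ → Fin n) × G => (x.1 0, x.2) :=
    ((measurable_pi_apply 0).comp measurable_fst).prodMk measurable_snd
  exact h1.comp h2

lemma map_restrict_skew (h : Fin n → G) (q : Fin n → ℝ≥0∞)
    (μ : Measure (ℕ → Fin n)) [IsProbabilityMeasure μ]
    (hcyl : ∀ (m : ℕ) (w : Fin m → Fin n),
      μ {ω | ∀ i : Fin m, ω (i : ℕ) = w i} = ∏ i, q (w i))
    (lam : Measure G) [IsProbabilityMeasure lam] [lam.IsMulLeftInvariant] (i : Fin n) :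
    ((μ.prod lam).restrict ({ω | ω 0 = i} ×ˢ univ)).map (skew h) = q i • μ.prod lam := by
  have h1 : ((μ.prod lam).restrict ({ω | ω 0 = i} ×ˢ univ)).map (skew h) =
      ((μ.prod lam).restrict ({ω | ω 0 = i} ×ˢ univ)).map
        (Prod.map (fun ω j => ω (j + 1)) (h i * ·)) := by
    refine Measure.map_congr ?_
    filter_upwards [ae_restrict_mem ((measurableSet_first i).prod MeasurableSet.univ)] with x hx
    have hx : x.1 0 = i := hx.1
    simp [skew, Prod.map, hx]
  rw [h1, ← Measure.prod_restrict, Measure.restrict_univ,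
    ← Measure.map_prod_map _ _ measurable_shift (measurable_const_mul (h i)),
    map_restrict_shift q μ hcyl, map_mul_left_eq_self, Measure.prod_smul_left]

lemma measure_first_inter_preimage_skew (h : Fin n → G) (q : Fin n → ℝ≥0∞)
    (μ : Measure (ℕ → Fin n)) [IsProbabilityMeasure μ]
    (hcyl : ∀ (m : ℕ) (w : Fin m → Fin n),
      μ {ω | ∀ i : Fin m, ω (i : ℕ) = w i} = ∏ i, q (w i))
    (lam : Measure G) [IsProbabilityMeasure lam] [lam.IsMulLeftInvariant] (i : Fin n)
    {E : Set ((ℕ → Fin n) × G)} (hE : MeasurableSet E) :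
    μ.prod lam (({ω | ω 0 = i} ×ˢ univ) ∩ skew h ⁻¹' E) = q i * μ.prod lam E := by
  have := congrArg (fun m => m E) (map_restrict_skew h q μ hcyl lam i)
  simpa [Measure.map_apply (measurable_skew h) hE,
    Measure.restrict_apply (measurable_skew h hE), inter_comm] using this

lemma map_skew (h : Fin n → G) (q : Fin n → ℝ≥0∞) (hq : ∑ i, q i = 1)
    (μ : Measure (ℕ → Fin n)) [IsProbabilityMeasure μ]
    (hcyl : ∀ (m : ℕ) (w : Fin m → Fin n),
      μ {ω | ∀ i : Fin m, ω (i : ℕ) = w i} = ∏ i, q (w i))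
    (lam : Measure G) [IsProbabilityMeasure lam] [lam.IsMulLeftInvariant] :
    (μ.prod lam).map (skew h) = μ.prod lam := by
  ext E hE
  rw [Measure.map_apply (measurable_skew h) hE]
  have hU : skew h ⁻¹' E = ⋃ i, ({ω | ω 0 = i} ×ˢ univ) ∩ skew h ⁻¹' E := by
    ext x
    simp
  rw [hU, measure_iUnion]
  · simp_rw [measure_first_inter_preimage_skew h q μ hcyl lam _ hE]
    rw [tsum_fintype, ← Finset.sum_mul, hq, one_mul]
  · intro i j hij
    refine Set.disjoint_left.2 fun x hx hx' => hij ?_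
    exact (hx.1.1 : x.1 0 = i).symm.trans hx'.1.1
  · exact fun i => ((measurableSet_first i).prod MeasurableSet.univ).inter (measurable_skew h hE)

/-! ### Harmonic functions and invariant measures on the group -/

/-- A bounded function harmonic for the steps `hᵢ` is almost everywhere invariant under each
step: the defect `∑ pᵢ (φ (hᵢ g) - φ g)² = ∑ pᵢ φ (hᵢ g)² - φ g²` integrates to zero. -/
lemma ae_eq_of_harmonic (h : Fin n → G) (p : Fin n → ℝ) (hp : ∀ i, 0 < p i)
    (hpsum : ∑ i, p i = 1)
    (lam : Measure G) [IsProbabilityMeasure lam] [lam.IsMulLeftInvariant]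
    (φ : G → ℝ) (hφ : Measurable φ) (hb : ∀ g, |φ g| ≤ 1)
    (hharm : ∀ g, φ g = ∑ i, p i * φ (h i * g)) (i : Fin n) :
    ∀ᵐ g ∂lam, φ (h i * g) = φ g := by
  have hint : Integrable (fun g => φ g ^ 2) lam := by
    refine Integrable.of_bound (hφ.pow_const 2).aestronglyMeasurable 1 (ae_of_all _ fun g => ?_)
    rw [Real.norm_eq_abs, abs_pow]
    exact pow_le_one₀ (abs_nonneg _) (hb g)
  have hint' : ∀ j, Integrable (fun g => φ (h j * g) ^ 2) lam := fun j =>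
    hint.comp_mul_left (h j)
  have hid : ∀ g, ∑ j, p j * (φ (h j * g) - φ g) ^ 2 =
      ∑ j, p j * φ (h j * g) ^ 2 - φ g ^ 2 := by
    intro g
    have : ∀ j, p j * (φ (h j * g) - φ g) ^ 2 =
        p j * φ (h j * g) ^ 2 - 2 * φ g * (p j * φ (h j * g)) + φ g ^ 2 * p j := fun j => by ring
    simp_rw [this]
    rw [Finset.sum_add_distrib, Finset.sum_sub_distrib, ← Finset.mul_sum, ← Finset.mul_sum,
      ← hharm, hpsum]
    ring
  have hzero : ∫ g, ∑ j, p j * (φ (h j * g) - φ g) ^ 2 ∂lam = 0 := by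
    simp_rw [hid]
    rw [integral_sub (integrable_finsetSum _ fun j _ => (hint' j).const_mul _) hint,
      integral_finsetSum _ fun j _ => (hint' j).const_mul _]
    simp_rw [integral_const_mul, integral_mul_left_eq_self (fun g => φ g ^ 2)]
    rw [← Finset.sum_mul, hpsum, one_mul, sub_self]
  have hterm : ∀ g j, 0 ≤ p j * (φ (h j * g) - φ g) ^ 2 := fun g j =>
    mul_nonneg (hp j).le (sq_nonneg _)
  rw [integral_eq_zero_iff_of_nonneg (fun g => Finset.sum_nonneg fun j _ => hterm g j)] at hzero
  · filter_upwards [hzero] with g hg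
    have := (Finset.sum_eq_zero_iff_of_nonneg fun j _ => hterm g j).1 hg i (Finset.mem_univ i)
    simpa [(hp i).ne', sub_eq_zero] using this
  · simp_rw [hid]
    exact (integrable_finsetSum _ fun j _ => (hint' j).const_mul _).sub hint

/-- A finite measure invariant under topological generators of a compact group is a multiple of
Haar measure: its stabiliser is a closed subgroup, because `g ↦ ∫ k (g x) dν(x)` is continuous for
each bounded continuous `k`. -/
lemma exists_eq_smul_of_invariant [CompactSpace G] [T2Space G] (h : Fin n → G)
    (hgen : ∀ H : Subgroup G, IsClosed (H : Set G) → (∀ i, h i ∈ H) → H = ⊤)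
    (lam : Measure G) [IsProbabilityMeasure lam] [lam.IsMulLeftInvariant]
    (ν : Measure G) [IsFiniteMeasure ν] (hν : ∀ i, ν.map (h i * ·) = ν) :
    ∃ c : ℝ≥0∞, ν = c • lam := by
  let H : Subgroup G :=
    { carrier := {g | ν.map (g * ·) = ν}
      mul_mem' := by
        intro a b ha hb
        simp only [mem_ofPred_eq] at *
        have : (a * b * ·) = (a * ·) ∘ (b * · : G → G) := by
          ext x
          simp [mul_assoc]
        rw [this, ← Measure.map_map (measurable_const_mul a) (measurable_const_mul b), hb, ha]
      one_mem' := by simp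
      inv_mem' := by
        intro a ha
        simp only [mem_ofPred_eq] at *
        conv_lhs => rw [← ha]
        rw [Measure.map_map (measurable_const_mul _) (measurable_const_mul a)]
        simp [Function.comp_def] }
  have hH : IsClosed (H : Set G) := by
    have : (H : Set G) = ⋂ k : BoundedContinuousFunction G ℝ,
        {g | ∫ x, k (g * x) ∂ν = ∫ x, k x ∂ν} := by
      ext g
      simp only [mem_iInter, mem_ofPred_eq]
      constructor
      · intro hg k
        conv_rhs => rw [← (show ν.map (g * ·) = ν from hg)]
        rw [integral_map (measurable_const_mul g).aemeasurable
          k.continuous.measurable.aestronglyMeasurable]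
      · intro hg
        have := Measure.isFiniteMeasure_map ν (g * ·)
        refine ext_of_forall_integral_eq_of_IsFiniteMeasure fun k => ?_
        rw [integral_map (measurable_const_mul g).aemeasurable
          k.continuous.measurable.aestronglyMeasurable, hg]
    rw [this]
    refine isClosed_iInter fun k => isClosed_eq ?_ continuous_const
    refine continuous_of_dominated (bound := fun _ => ‖k‖) (fun g => ?_) (fun g => ?_)
      (integrable_const _) (ae_of_all _ fun x => ?_)
    · exact (k.continuous.comp (continuous_const_mul g)).measurable.aestronglyMeasurable
    · exact ae_of_all _ fun x => k.norm_coe_le_norm _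
    · exact k.continuous.comp (continuous_mul_const x)
  have htop := hgen H hH hν
  have : ν.IsMulLeftInvariant := ⟨fun g => by
    have : g ∈ H := htop ▸ Subgroup.mem_top g
    exact this⟩
  have : lam.IsHaarMeasure := Measure.isHaarMeasure_of_isCompact_nonempty_interior lam univ
    isCompact_univ (by simp) (by simp) (by simp)
  exact ⟨_, Measure.isMulInvariant_eq_smul_of_compactSpace ν lam⟩

/-! ### Invariant sets of the skew product -/

/-- The fibre mass of an invariant set is harmonic, so the product measure
restricted to that set projects to a multiple of Haar measure on `G`. -/
lemma exists_measure_inter_univ_prod [CompactSpace G] [T2Space G] (h : Fin n → G)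
    (hgen : ∀ H : Subgroup G, IsClosed (H : Set G) → (∀ i, h i ∈ H) → H = ⊤)
    (lam : Measure G) [IsProbabilityMeasure lam] [lam.IsMulLeftInvariant]
    (p : Fin n → ℝ) (hp : ∀ i, 0 < p i) (hpsum : ∑ i, p i = 1)
    (μ : Measure (ℕ → Fin n)) [IsProbabilityMeasure μ]
    (hcyl : ∀ (m : ℕ) (w : Fin m → Fin n),
      μ {ω | ∀ i : Fin m, ω (i : ℕ) = w i} = ∏ i, ENNReal.ofReal (p (w i)))
    {A : Set ((ℕ → Fin n) × G)} (hA : MeasurableSet A) (hinv : skew h ⁻¹' A = A) :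
    ∃ c : ℝ≥0∞, ∀ B, MeasurableSet B → μ.prod lam (A ∩ univ ×ˢ B) = c * lam B := by
  set φ : G → ℝ≥0∞ := fun g => μ ((fun ω => (ω, g)) ⁻¹' A) with hφdef
  have hφ : Measurable φ := measurable_measure_prodMk_right hA
  have hharm : ∀ g, φ g = ∑ i, ENNReal.ofReal (p i) * φ (h i * g) := by
    intro g
    have hU : (fun ω => (ω, g)) ⁻¹' A = ⋃ i : Fin n, {ω | ω 0 = i} ∩
        (fun ω j => ω (j + 1)) ⁻¹' ((fun ω => (ω, h i * g)) ⁻¹' A) := by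
      conv_lhs => rw [← hinv]
      ext ω
      simp [skew]
    have hmeas : ∀ i, MeasurableSet ((fun ω : ℕ → Fin n => (ω, h i * g)) ⁻¹' A) := fun i =>
      measurable_prodMk_right hA
    simp only [hφdef]
    rw [hU, measure_iUnion, tsum_fintype]
    · refine Finset.sum_congr rfl fun i _ => ?_
      have := congrArg (fun m => m ((fun ω : ℕ → Fin n => (ω, h i * g)) ⁻¹' A))
        (map_restrict_shift (fun i => ENNReal.ofReal (p i)) μ hcyl i)
      simp only [Measure.map_apply measurable_shift (hmeas i),
        Measure.restrict_apply (measurable_shift (hmeas i)), Measure.smul_apply,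
        smul_eq_mul] at this
      rw [inter_comm, this]
    · intro i j hij
      refine Set.disjoint_left.2 fun x hx hx' => hij ?_
      exact (hx.1 : x 0 = i).symm.trans hx'.1
    · exact fun i => (measurableSet_first i).inter (measurable_shift (hmeas i))
  have hle : ∀ g, φ g ≤ 1 := fun g => prob_le_one
  have hne : ∀ g, φ g ≠ ∞ := fun g => measure_ne_top _ _
  have hstep : ∀ i, ∀ᵐ g ∂lam, φ (h i * g) = φ g := by
    intro i
    have := ae_eq_of_harmonic h p hp hpsum lam (fun g => (φ g).toReal) hφ.ennreal_toReal
      (fun g => by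
        rw [abs_of_nonneg ENNReal.toReal_nonneg]
        exact ENNReal.toReal_le_of_le_ofReal zero_le_one (by simpa using hle g))
      (fun g => by
        rw [hharm g, ENNReal.toReal_sum fun j _ => ENNReal.mul_ne_top ENNReal.ofReal_ne_top (hne _)]
        simp [ENNReal.toReal_ofReal (hp _).le]) i
    filter_upwards [this] with g hg
    exact (ENNReal.toReal_eq_toReal_iff' (hne _) (hne _)).1 hg
  have hνfin : IsFiniteMeasure (lam.withDensity φ) := by
    refine isFiniteMeasure_withDensity (ne_top_of_le_ne_top ENNReal.one_ne_top ?_)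
    calc ∫⁻ g, φ g ∂lam ≤ ∫⁻ _, 1 ∂lam := lintegral_mono hle
      _ = 1 := by simp
  obtain ⟨c, hc⟩ := exists_eq_smul_of_invariant h hgen lam (lam.withDensity φ) (by
    intro i
    ext B hB
    have hm := measurable_const_mul (h i)
    rw [Measure.map_apply hm hB, withDensity_apply _ (hm hB), withDensity_apply _ hB,
      ← lintegral_indicator (hm hB), ← lintegral_indicator hB,
      ← lintegral_mul_left_eq_self (B.indicator φ) (h i)]
    refine lintegral_congr_ae ?_
    filter_upwards [hstep i] with g hg
    by_cases hgB : h i * g ∈ B <;> simp [hgB, hg])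
  refine ⟨c, fun B hB => ?_⟩
  have := congrArg (fun m => m B) hc
  simp only [withDensity_apply _ hB, Measure.smul_apply, smul_eq_mul] at this
  rw [← this, Measure.prod_apply_symm (hA.inter (MeasurableSet.univ.prod hB)),
    ← lintegral_indicator hB]
  refine lintegral_congr fun g => ?_
  by_cases hg : g ∈ B <;> simp [hg, hφdef, preimage_inter, mk_preimage_prod_left,
    mk_preimage_prod_left_eq_empty]

lemma measure_inter_cyl_prod (h : Fin n → G) (q : Fin n → ℝ≥0∞)
    (μ : Measure (ℕ → Fin n)) [IsProbabilityMeasure μ]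
    (hcyl : ∀ (m : ℕ) (w : Fin m → Fin n),
      μ {ω | ∀ i : Fin m, ω (i : ℕ) = w i} = ∏ i, q (w i))
    (lam : Measure G) [IsProbabilityMeasure lam] [lam.IsMulLeftInvariant]
    {A : Set ((ℕ → Fin n) × G)} (hA : MeasurableSet A) (hinv : skew h ⁻¹' A = A)
    (c : ℝ≥0∞) (hc : ∀ B, MeasurableSet B → μ.prod lam (A ∩ univ ×ˢ B) = c * lam B)
    (m : ℕ) (w : Fin m → Fin n) (B : Set G) (hB : MeasurableSet B) :
    μ.prod lam (A ∩ {ω | ∀ i : Fin m, ω (i : ℕ) = w i} ×ˢ B) =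
      c * (∏ i, q (w i)) * lam B := by
  induction m generalizing B with
  | zero => simpa using hc B hB
  | succ m ih =>
    -- `A ∩ (C_w × B)` is the part over `{ω | ω 0 = w 0}` of `F⁻¹ (A ∩ (C_{tail w} × h_{w 0} B))`
    have hB' : MeasurableSet (((h (w 0))⁻¹ * ·) ⁻¹' B) := measurable_const_mul _ hB
    have hset : A ∩ {ω | ∀ i : Fin (m + 1), ω (i : ℕ) = w i} ×ˢ B =
        ({ω | ω 0 = w 0} ×ˢ univ) ∩ skew h ⁻¹' (A ∩
          {ω | ∀ i : Fin m, ω (i : ℕ) = w i.succ} ×ˢ (((h (w 0))⁻¹ * ·) ⁻¹' B)) := by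
      rw [preimage_inter, hinv, cyl_succ]
      ext ⟨ω, g⟩
      simp only [mem_inter_iff, mem_prod, mem_ofPred_eq, mem_preimage, mem_univ, skew]
      constructor
      · rintro ⟨h1, ⟨h2, h3⟩, h4⟩
        exact ⟨⟨h2, trivial⟩, h1, h3, by simpa [h2] using h4⟩
      · rintro ⟨⟨h2, -⟩, h1, h3, h4⟩
        exact ⟨h1, ⟨h2, h3⟩, by simpa [h2] using h4⟩
    rw [hset, measure_first_inter_preimage_skew h q μ hcyl lam _
      (hA.inter ((measurableSet_cyl m _).prod hB')), ih (fun i => w i.succ) _ hB',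
      measure_preimage_mul, Fin.prod_univ_succ]
    ring

theorem skew_zero_one [CompactSpace G] [T2Space G] (h : Fin n → G)
    (hgen : ∀ H : Subgroup G, IsClosed (H : Set G) → (∀ i, h i ∈ H) → H = ⊤)
    (lam : Measure G) [IsProbabilityMeasure lam] [lam.IsMulLeftInvariant]
    (p : Fin n → ℝ) (hp : ∀ i, 0 < p i) (hpsum : ∑ i, p i = 1)
    (μ : Measure (ℕ → Fin n)) [IsProbabilityMeasure μ]
    (hcyl : ∀ (m : ℕ) (w : Fin m → Fin n),
      μ {ω | ∀ i : Fin m, ω (i : ℕ) = w i} = ∏ i, ENNReal.ofReal (p (w i)))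
    {A : Set ((ℕ → Fin n) × G)} (hA : MeasurableSet A) (hinv : skew h ⁻¹' A = A) :
    μ.prod lam A = 0 ∨ μ.prod lam A = 1 := by
  obtain ⟨c, hc⟩ := exists_measure_inter_univ_prod h hgen lam p hp hpsum μ hcyl hA hinv
  have hcA : μ.prod lam A = c := by simpa using hc univ MeasurableSet.univ
  have hctop : c ≠ ∞ := hcA ▸ measure_ne_top _ _
  have hrect : ∀ C B, MeasurableSet C → MeasurableSet B →
      μ.prod lam (A ∩ C ×ˢ B) = c * μ C * lam B := by
    intro C B hC hB
    have hfst : ∀ D : Set (ℕ → Fin n), MeasurableSet D →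
        ((μ.prod lam).restrict (A ∩ univ ×ˢ B)).map Prod.fst D = μ.prod lam (A ∩ D ×ˢ B) := by
      intro D hD
      rw [Measure.map_apply measurable_fst hD, Measure.restrict_apply (measurable_fst hD)]
      congr 1
      ext x
      simp only [mem_inter_iff, mem_preimage, mem_prod, mem_univ, true_and]
      tauto
    have := Measure.isFiniteMeasure_map ((μ.prod lam).restrict (A ∩ univ ×ˢ B)) Prod.fst
    have heq : ((μ.prod lam).restrict (A ∩ univ ×ˢ B)).map Prod.fst = (c * lam B) • μ := by
      refine ext_of_cylinder _ _ fun m w => ?_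
      rw [hfst _ (measurableSet_cyl m w),
        measure_inter_cyl_prod h (fun i => ENNReal.ofReal (p i)) μ hcyl lam hA hinv c hc m w B hB,
        Measure.smul_apply, hcyl, smul_eq_mul]
      ring
    rw [← hfst C hC, heq, Measure.smul_apply, smul_eq_mul]
    ring
  have := Measure.smul_finite μ hctop
  have hprod : (c • μ).prod lam = (μ.prod lam).restrict A := by
    refine Measure.prod_eq fun C B hC hB => ?_
    rw [Measure.restrict_apply (hC.prod hB), inter_comm, hrect C B hC hB, Measure.smul_apply,
      smul_eq_mul]
  have hcompl := congrArg (fun m => m Aᶜ) hprod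
  simp only [Measure.prod_smul_left, Measure.smul_apply, smul_eq_mul,
    Measure.restrict_apply hA.compl, compl_inter_self, measure_empty, mul_eq_zero] at hcompl
  rcases hcompl with h0 | h0
  · exact Or.inl (hcA.trans h0)
  · exact Or.inr ((prob_compl_eq_zero_iff hA).1 h0)

end Skew

/-! ### The orthogonal group -/

lemma isCompact_orthogonalGroup (d : ℕ) :
    IsCompact (Matrix.orthogonalGroup (Fin d) ℝ : Set (Matrix (Fin d) (Fin d) ℝ)) := by
  have hbox : IsCompact (Set.pi univ fun _ : Fin d => Set.pi univ fun _ : Fin d =>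
      Set.Icc (-1 : ℝ) 1) := isCompact_univ_pi fun _ => isCompact_univ_pi fun _ => isCompact_Icc
  refine IsCompact.of_isClosed_subset hbox ?_ ?_
  · have : (Matrix.orthogonalGroup (Fin d) ℝ : Set (Matrix (Fin d) (Fin d) ℝ)) =
        {U | U * star U = 1} := by
      ext U
      exact Matrix.mem_orthogonalGroup_iff _ _
    rw [this]
    exact isClosed_eq (continuous_id.mul continuous_star) continuous_const
  · intro U hU i _ j _
    exact abs_le.1 (entry_norm_bound_of_unitary hU i j)

theorem stmt8
    (d n : ℕ)
    (h : Fin n → Matrix.orthogonalGroup (Fin d) ℝ)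
    -- `G` is the closure of the subgroup generated by `h 1, ..., h n`,
    -- i.e. the smallest closed subgroup containing them
    (G : Subgroup (Matrix.orthogonalGroup (Fin d) ℝ))
    (hGclosed : IsClosed (G : Set (Matrix.orthogonalGroup (Fin d) ℝ)))
    (hGmem : ∀ i, h i ∈ G)
    (hGmin : ∀ H : Subgroup (Matrix.orthogonalGroup (Fin d) ℝ),
      IsClosed (H : Set (Matrix.orthogonalGroup (Fin d) ℝ)) → (∀ i, h i ∈ H) → G ≤ H)
    -- `lamG` is the normalized Haar measure of `G`
    (lamG : Measure G) (hlamGprob : IsProbabilityMeasure lamG)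
    (hlamGinv : ∀ g₀ : G, lamG.map (fun g => g₀ * g) = lamG)
    -- strictly positive probability vector and the Bernoulli measure `p^ℕ`
    (p : Fin n → ℝ) (hp : ∀ i, 0 < p i) (hpsum : ∑ i, p i = 1)
    (μBer : Measure (ℕ → Fin n)) (hμBerprob : IsProbabilityMeasure μBer)
    (hcyl : ∀ (m : ℕ) (w : Fin m → Fin n),
      μBer {ω | ∀ i : Fin m, ω (i : ℕ) = w i} = ∏ i, ENNReal.ofReal (p (w i)))
    -- the skew product `F (ω, g) = (σ ω, h_{ω₀} g)`
    (F : (ℕ → Fin n) × G → (ℕ → Fin n) × G)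
    (hF : ∀ (ω : ℕ → Fin n) (g : G),
      F (ω, g) = (fun j => ω (j + 1), (⟨h (ω 0), hGmem (ω 0)⟩ : G) * g)) :
    (μBer.prod lamG).map F = μBer.prod lamG ∧
    ∀ A : Set ((ℕ → Fin n) × G), MeasurableSet A → F ⁻¹' A = A →
      (μBer.prod lamG) A = 0 ∨ (μBer.prod lamG) A = 1 := by
  have hcomp : CompactSpace (Matrix.orthogonalGroup (Fin d) ℝ) :=
    isCompact_iff_compactSpace.1 (isCompact_orthogonalGroup d)
  have hGcomp : CompactSpace G := isCompact_iff_compactSpace.1 hGclosed.isCompact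
  have hborel : BorelSpace G := ⟨rfl⟩
  have hsc : SecondCountableTopology (Matrix (Fin d) (Fin d) ℝ) :=
    inferInstanceAs (SecondCountableTopology (Fin d → Fin d → ℝ))
  have hscO : SecondCountableTopology (Matrix.orthogonalGroup (Fin d) ℝ) :=
    TopologicalSpace.Subtype.secondCountableTopology _
  have hscG : SecondCountableTopology G := TopologicalSpace.Subtype.secondCountableTopology _
  have hleft : lamG.IsMulLeftInvariant := ⟨hlamGinv⟩
  have hFskew : F = skew fun i => (⟨h i, hGmem i⟩ : G) := funext fun x => hF x.1 x.2
  have hgen : ∀ H : Subgroup G, IsClosed (H : Set G) →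
      (∀ i, (⟨h i, hGmem i⟩ : G) ∈ H) → H = ⊤ := by
    intro H hH hmem
    have hle : G ≤ H.map G.subtype := by
      refine hGmin _ ?_ fun i => ⟨_, hmem i, rfl⟩
      rw [Subgroup.coe_map]
      exact hGclosed.isClosedEmbedding_subtypeVal.isClosedMap _ hH
    refine eq_top_iff.2 fun g _ => ?_
    obtain ⟨g', hg', hgg'⟩ := hle g.2
    rwa [← Subtype.ext hgg']
  rw [hFskew]
  refine ⟨map_skew _ (fun i => ENNReal.ofReal (p i)) ?_ μBer hcyl lamG, fun A hA hinv =>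
    skew_zero_one _ hgen lamG p hp hpsum μBer hcyl hA hinv⟩
  rw [← ENNReal.ofReal_sum_of_nonneg fun i _ => (hp i).le, hpsum, ENNReal.ofReal_one]
end

section
/- (Local entropy averages.) Let 𝒜 be a finite alphabet, ρ ∈ (0,1), and equip 𝒜^ℕ with the metric d_ρ(x,y) = ρ^{n(x,y)}, where n(x,y) is the length of the longest common initial segment of x and y. Let η be the Bernoulli measure on 𝒜^ℕ for a strictly positive probability vector, and for a finite word u let η_u be the normalized restriction of η to the cylinder [u]. Let π be a k-dimensional subspace of ℝ^d and let F : 𝒜^ℕ → π be a 1-Lipschitz map. There is a constant C depending only on k (and on an upper bound for ρ away from 1) such that: if for η-almost every ω, liminf_{N→∞} (1/N) Σ_{j=1}^N H_{ρ^{j+1}}(F_*η_{(ω_1,...,ω_j)}) / log(1/ρ) ≥ α, then dim (F_*η) ≥ α − C/log(1/ρ). -/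
/-!
Local entropy averages bound the dimension of `F_* η` from below.

The idea is to lift `F` to a map of trees. The code `c_j(ω)` (`code`) is the grid cube of side
`ρ ^ j` containing the image of a fixed representative of the cylinder `[ω_1 … ω_j]`; it depends
only on the first `j` letters, and it differs by at most one in each coordinate from the cube that
contains `F ω`. Write `ν_n(ω)` for the `η`-measure of the set of sequences with the same codes
`c_0, …, c_n` as `ω` (`cls`).

Each code is predicted from the first `j` letters by the average of two conditional laws of
`c_{j+1}`: given `c_0, …, c_j`, and given `ω_1, …, ω_j` (`pr`). Let `Z_j` (`info`) be minus the
logarithm of the prediction at the code which occurs.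

* `0 ≤ Z_j ≤ B`: the second law gives the code which occurs at least the smallest letter
  probability. Hence a law of large numbers holds: almost surely `∑ Z_j` is at least the sum of the
  conditional means of the `Z_j` given `ω_1, …, ω_j`, up to `ε n` (`ae_sum_ge`, by exponential
  moments and Borel–Cantelli).
* By Gibbs' inequality the conditional mean of `Z_j` is at least the grid entropy at scale
  `ρ ^ (j + 1)` of the cylinder measure, minus `3 ^ k` (`entropy_le`, `gridEntropy_le`).
* The first law multiplies up to `ν_n`, so `∑_{j < n} Z_j ≤ n log 2 - log ν_n` (`sum_info_le`).

Consequently `ν_n(ω)` is eventually at most `exp (-n (α log (1/ρ) - O_k(1)))`. Finally, the points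
which `F` sends into a set of diameter at most `ρ ^ n` have at most `5 ^ (k (n + 1))` code sequences
up to level `n` (`measure_preimage_le`), and the mass distribution principle (`le_dimH_of_mass`)
gives the bound on the dimension, again with a loss of `O_k(1) / log (1/ρ)`.
-/

open MeasureTheory Metric Set Filter
open scoped ENNReal Topology

/-- The (lower Hausdorff) dimension of a measure:
`dim μ = inf { dim_H A : A Borel, μ A > 0 }`. -/
noncomputable def dimMeas {X : Type*} [EMetricSpace X] [MeasurableSpace X]
    (μ : Measure X) : ℝ≥0∞ :=
  ⨅ (A : Set X) (_ : MeasurableSet A) (_ : 0 < μ A), dimH A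

/-- Shannon entropy of a measure on a `k`-dimensional subspace `π` with respect to the
partition of `π` into half-open grid cubes of side length `r` (the grid coordinates being
given by a linear isometry `e` with `ℝ^k`). -/
noncomputable def gridEntropy {d k : ℕ} (π : Submodule ℝ (EuclideanSpace ℝ (Fin d)))
    (e : π ≃ₗᵢ[ℝ] EuclideanSpace ℝ (Fin k)) (r : ℝ) (μ : Measure π) : ℝ :=
  ∑' z : Fin k → ℤ,
    Real.negMulLog
      ((μ ((⇑e) ⁻¹' {x | ∀ i, x i ∈ Set.Ico (r * (z i : ℝ)) (r * ((z i : ℝ) + 1))})).toReal)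

set_option linter.unusedSectionVars false

namespace LocalEntropy

/-! ### Cylinders and functions of finitely many letters -/

section Cylinders

variable {A : Type*}

/-- The cylinder of all sequences that share their first `j` letters with `ω`. -/
def cyl (j : ℕ) (ω : ℕ → A) : Set (ℕ → A) := {ω' | ∀ i < j, ω' i = ω i}

/-- `f` depends only on the first `n` letters. -/
def Dep {β : Type*} (n : ℕ) (f : (ℕ → A) → β) : Prop :=
  ∀ ω ω', ω' ∈ cyl n ω → f ω' = f ω

/-- The sequence with the first `n` letters of `ω`, continued by a fixed letter. -/
noncomputable def rep [Nonempty A] (n : ℕ) (ω : ℕ → A) : ℕ → A :=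
  fun i => if i < n then ω i else Classical.arbitrary A

lemma mem_cyl_self (j : ℕ) (ω : ℕ → A) : ω ∈ cyl j ω := fun _ _ => rfl

lemma cyl_eq_of_mem {j : ℕ} {ω ω' : ℕ → A} (h : ω' ∈ cyl j ω) : cyl j ω' = cyl j ω := by
  ext x
  exact ⟨fun hx i hi => (hx i hi).trans (h i hi), fun hx i hi => (hx i hi).trans (h i hi).symm⟩

lemma cyl_anti {m n : ℕ} (h : m ≤ n) (ω : ℕ → A) : cyl n ω ⊆ cyl m ω :=
  fun _ hx i hi => hx i (hi.trans_le h)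

lemma cyl_zero (ω : ℕ → A) : cyl 0 ω = univ := by
  ext x; simp [cyl]

lemma Dep.mono {β : Type*} {m n : ℕ} {f : (ℕ → A) → β} (hf : Dep m f) (h : m ≤ n) : Dep n f :=
  fun ω ω' hω => hf ω ω' (cyl_anti h ω hω)

lemma rep_mem_cyl [Nonempty A] (n : ℕ) (ω : ℕ → A) : rep n ω ∈ cyl n ω := by
  intro i hi; simp [rep, hi]

lemma dep_rep [Nonempty A] (n : ℕ) : Dep n (rep (A := A) n) := by
  intro ω ω' h
  ext i
  by_cases hi : i < n
  · simp [rep, hi, h i hi]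
  · simp [rep, hi]

/-- The infinite word that continues the finite word `v` by a fixed letter. -/
noncomputable def ext [Nonempty A] {n : ℕ} (v : Fin n → A) : ℕ → A :=
  fun i => if h : i < n then v ⟨i, h⟩ else Classical.arbitrary A

lemma ext_restrict_mem [Nonempty A] (n : ℕ) (ω : ℕ → A) :
    ω ∈ cyl n (ext (fun i : Fin n => ω i)) := by
  intro i hi; simp [ext, hi]

lemma Dep.eq_comp [Nonempty A] {β : Type*} {n : ℕ} {f : (ℕ → A) → β} (hf : Dep n f) :
    f = (fun v : Fin n → A => f (ext v)) ∘ (fun ω i => ω i) := by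
  funext ω
  exact hf _ _ (ext_restrict_mem n ω)

variable [Fintype A] [Nonempty A] [MeasurableSpace A] [MeasurableSingletonClass A]

lemma Dep.measurable {β : Type*} [MeasurableSpace β] {n : ℕ} {f : (ℕ → A) → β}
    (hf : Dep n f) : Measurable f := by
  rw [hf.eq_comp]
  exact (measurable_of_finite _).comp (by fun_prop)

lemma Dep.integrable {n : ℕ} {f : (ℕ → A) → ℝ}
    (hf : Dep n f) (η : Measure (ℕ → A)) [IsFiniteMeasure η] : Integrable f η := by
  rw [hf.eq_comp]
  exact Integrable.comp_measurable Integrable.of_finite (by fun_prop)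

lemma measurableSet_cyl (j : ℕ) (ω : ℕ → A) : MeasurableSet (cyl j ω) := by
  have : Dep j (fun x => x ∈ cyl j ω) := by
    intro x x' hx
    apply propext
    exact ⟨fun h i hi => (hx i hi).symm.trans (h i hi), fun h i hi => (hx i hi).trans (h i hi)⟩
  exact measurableSet_setOfPred.mpr this.measurable

/-- Integrals split over the words of length `n`. -/
lemma integral_eq_sum_words (η : Measure (ℕ → A)) (n : ℕ) {f : (ℕ → A) → ℝ}
    (hf : Integrable f η) :
    ∫ x, f x ∂η = ∑ v : Fin n → A, ∫ x in cyl n (ext v), f x ∂η := by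
  rw [← integral_iUnion_fintype (fun v => measurableSet_cyl n _) _ (fun v => hf.integrableOn)]
  · rw [← setIntegral_univ]
    congr 2
    symm
    rw [eq_univ_iff_forall]
    intro x
    exact mem_iUnion.mpr ⟨fun i => x i, ext_restrict_mem n x⟩
  · intro v w hvw
    rw [Function.onFun, Set.disjoint_left]
    intro x hx hx'
    apply hvw
    funext i
    have h1 := hx i i.2
    have h2 := hx' i i.2
    simp only [ext, i.2, dite_true] at h1 h2
    exact h1.symm.trans h2

/-! ### A one-sided law of large numbers -/

/-- The mean of `f` over the cylinder of length `j` of `ω`, that is, the conditional expectation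
of `f` given the first `j` letters. -/
noncomputable def cmean (η : Measure (ℕ → A)) (j : ℕ) (f : (ℕ → A) → ℝ) (ω : ℕ → A) : ℝ :=
  (η.real (cyl j ω))⁻¹ * ∫ x in cyl j ω, f x ∂η

lemma dep_cmean (η : Measure (ℕ → A)) (j : ℕ) (f : (ℕ → A) → ℝ) : Dep j (cmean η j f) := by
  intro ω ω' h
  simp only [cmean, cyl_eq_of_mem h]

lemma integral_mul_le (η : Measure (ℕ → A)) [IsFiniteMeasure η] {n : ℕ} {G f : (ℕ → A) → ℝ}
    (hG : Dep n G) (hG0 : ∀ ω, 0 ≤ G ω) (hf : Dep (n + 1) f) {K : ℝ}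
    (h : ∀ ω, ∫ x in cyl n ω, f x ∂η ≤ K * η.real (cyl n ω)) :
    ∫ x, G x * f x ∂η ≤ K * ∫ x, G x ∂η := by
  have hGf : Dep (n + 1) (fun x => G x * f x) := by
    intro ω ω' hω
    simp only [hf ω ω' hω, hG.mono (Nat.le_succ n) ω ω' hω]
  rw [integral_eq_sum_words η n (hGf.integrable η), integral_eq_sum_words η n (hG.integrable η),
    Finset.mul_sum]
  refine Finset.sum_le_sum fun v _ => ?_
  have h1 : ∫ x in cyl n (ext v), G x * f x ∂η = G (ext v) * ∫ x in cyl n (ext v), f x ∂η := by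
    rw [← integral_const_mul]
    refine setIntegral_congr_fun (measurableSet_cyl n _) fun x hx => ?_
    simp only [hG _ _ hx]
  have h2 : ∫ x in cyl n (ext v), G x ∂η = G (ext v) * η.real (cyl n (ext v)) := by
    rw [setIntegral_congr_fun (g := fun _ => G (ext v)) (measurableSet_cyl n _)
      fun x hx => hG _ _ hx]
    simp [mul_comm]
  rw [h1, h2]
  calc _ ≤ G (ext v) * (K * η.real (cyl n (ext v))) :=
        mul_le_mul_of_nonneg_left (h _) (hG0 _)
    _ = _ := by ring

/-- Exponential moment bound for a bounded centred increment, from `e^y ≤ 1 + y + y²` for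
`|y| ≤ 1`. -/
lemma setIntegral_exp_le (η : Measure (ℕ → A)) [IsProbabilityMeasure η] {n : ℕ} (ω : ℕ → A)
    (hpos : 0 < η.real (cyl n ω)) {f : (ℕ → A) → ℝ} (hf : Dep (n + 1) f) {B t : ℝ}
    (h0 : ∀ x, 0 ≤ f x) (hB : ∀ x, f x ≤ B) (ht : 0 ≤ t) (htB : t * B ≤ 1) :
    ∫ x in cyl n ω, Real.exp (-t * (f x - cmean η n f x)) ∂η
      ≤ (1 + t ^ 2 * B ^ 2) * η.real (cyl n ω) := by
  set m := cmean η n f ω with hm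
  have hint : IntegrableOn f (cyl n ω) η := (hf.integrable η).integrableOn
  have hmD : m * η.real (cyl n ω) = ∫ x in cyl n ω, f x ∂η := by
    rw [hm, cmean]; field_simp
  have hm0 : 0 ≤ m := by
    refine mul_nonneg (inv_nonneg.mpr hpos.le) (integral_nonneg h0)
  have hmB : m ≤ B := by
    have : ∫ x in cyl n ω, f x ∂η ≤ ∫ x in cyl n ω, B ∂η :=
      integral_mono hint (integrable_const _) hB
    rw [setIntegral_const, smul_eq_mul, ← hmD, mul_comm] at this
    exact le_of_mul_le_mul_left this hpos
  have hle : ∫ x in cyl n ω, Real.exp (-t * (f x - cmean η n f x)) ∂η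
      ≤ ∫ x in cyl n ω, ((1 + t ^ 2 * B ^ 2 + t * m) - t * f x) ∂η := by
    refine setIntegral_mono_on ?_ ?_ (measurableSet_cyl n ω) ?_
    · refine (Dep.integrable (n := n + 1) ?_ η).integrableOn
      intro x x' hx
      simp only [hf x x' hx, (dep_cmean η n f).mono (Nat.le_succ n) x x' hx]
    · exact (integrable_const _).sub (hint.const_mul t)
    · intro x hx
      rw [dep_cmean η n f ω x hx, ← hm]
      have habs : |f x - m| ≤ B := abs_le.mpr ⟨by linarith [h0 x], by linarith [hB x]⟩
      have habs' : |-t * (f x - m)| ≤ t * B := by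
        rw [abs_mul, abs_neg, abs_of_nonneg ht]; exact mul_le_mul_of_nonneg_left habs ht
      have h1 := (abs_le.mp (Real.abs_exp_sub_one_sub_id_le (habs'.trans htB))).2
      have h2 : (-t * (f x - m)) ^ 2 ≤ (t * B) ^ 2 := sq_le_sq' (by linarith [(abs_le.mp habs').1])
        (abs_le.mp habs').2
      nlinarith
  refine hle.trans (le_of_eq ?_)
  rw [integral_sub (integrable_const _) (hint.const_mul t), integral_const_mul, ← hmD,
    setIntegral_const, smul_eq_mul]
  ring

/-- Lower half of the strong law for sums of uniformly bounded functions `f j` of the first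
`j + 1` letters, centred by their conditional means: exponential moments and Borel–Cantelli. -/
lemma ae_sum_ge (η : Measure (ℕ → A)) [IsProbabilityMeasure η]
    (hpos : ∀ j ω, 0 < η.real (cyl j ω)) {f : ℕ → (ℕ → A) → ℝ} (hf : ∀ j, Dep (j + 1) (f j))
    {B : ℝ} (h0 : ∀ j x, 0 ≤ f j x) (hB : ∀ j x, f j x ≤ B) {ε : ℝ} (hε : 0 < ε) :
    ∀ᵐ ω ∂η, ∀ᶠ n : ℕ in atTop,
      ∑ j ∈ Finset.range n, cmean η j (f j) ω - ε * n ≤ ∑ j ∈ Finset.range n, f j ω := by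
  -- enlarging the bound makes it positive
  wlog hB1 : 0 < B generalizing B
  · exact this (B := max B 1) (fun j x => (hB j x).trans (le_max_left _ _)) (by positivity)
  set t : ℝ := min (1 / B) (ε / (2 * B ^ 2)) with ht
  have ht0 : 0 < t := by positivity
  have htB : t * B ≤ 1 := by
    have := min_le_left (1 / B) (ε / (2 * B ^ 2))
    rw [← ht, le_div_iff₀ hB1] at this
    exact this
  have htB2 : t * (2 * B ^ 2) ≤ ε := by
    have := min_le_right (1 / B) (ε / (2 * B ^ 2))
    rwa [← ht, le_div_iff₀ (by positivity)] at this
  set S : ℕ → (ℕ → A) → ℝ := fun n ω => ∑ j ∈ Finset.range n, (f j ω - cmean η j (f j) ω)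
  have hS : ∀ n, Dep n (S n) := by
    intro n ω ω' h
    refine Finset.sum_congr rfl fun j hj => ?_
    have hj' : j + 1 ≤ n := Finset.mem_range.mp hj
    rw [(hf j).mono hj' ω ω' h, (dep_cmean η j (f j)).mono (by omega : j ≤ n) ω ω' h]
  have hexpS : ∀ n, Dep n (fun ω => Real.exp (-t * S n ω)) := by
    intro n ω ω' h
    simp only [hS n ω ω' h]
  have hmgf : ∀ n, ∫ ω, Real.exp (-t * S n ω) ∂η ≤ (1 + t ^ 2 * B ^ 2) ^ n := by
    intro n
    induction n with
    | zero => simp [S]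
    | succ n ih =>
      have hstep : ∀ ω, Real.exp (-t * S (n + 1) ω)
          = Real.exp (-t * S n ω) * Real.exp (-t * (f n ω - cmean η n (f n) ω)) := by
        intro ω
        rw [← Real.exp_add]
        simp only [S, Finset.sum_range_succ]
        ring_nf
      simp_rw [hstep]
      refine (integral_mul_le η (hexpS n) (fun _ => (Real.exp_pos _).le) ?_
        (fun ω => setIntegral_exp_le η ω (hpos n ω) (hf n) (h0 n) (hB n) ht0.le htB)).trans ?_
      · intro x x' hx
        simp only [hf n x x' hx, (dep_cmean η n (f n)).mono (Nat.le_succ n) x x' hx]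
      · rw [pow_succ, mul_comm]
        exact mul_le_mul_of_nonneg_right ih (by positivity)
  set c : ℝ := Real.exp (-(t * ε / 2))
  have hc1 : c < 1 := Real.exp_lt_one_iff.mpr (by have := mul_pos ht0 hε; linarith)
  have hprob : ∀ n : ℕ, η.real {ω | S n ω ≤ -(ε * n)} ≤ c ^ n := by
    intro n
    refine (ProbabilityTheory.measure_le_le_exp_mul_mgf (t := -t) _ (by linarith)
      ((hexpS n).integrable η)).trans ?_
    have h1 : (1 + t ^ 2 * B ^ 2) ≤ Real.exp (t * ε / 2) := by
      have := Real.add_one_le_exp (t * ε / 2)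
      nlinarith
    calc _ ≤ Real.exp (- -t * -(ε * n)) * (Real.exp (t * ε / 2)) ^ n := by
          refine mul_le_mul_of_nonneg_left ?_ (Real.exp_pos _).le
          exact (hmgf n).trans (pow_le_pow_left₀ (by positivity) h1 n)
      _ = c ^ n := by
          rw [← Real.exp_nat_mul, ← Real.exp_nat_mul, ← Real.exp_add]
          congr 1; ring
  have hsum : ∑' n : ℕ, η {ω | S n ω ≤ -(ε * n)} ≠ ∞ := by
    have hle : ∀ n : ℕ, η {ω | S n ω ≤ -(ε * n)} ≤ ENNReal.ofReal (c ^ n) := by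
      intro n
      rw [← ofReal_measureReal]
      exact ENNReal.ofReal_le_ofReal (hprob n)
    exact ne_top_of_le_ne_top
      (summable_geometric_of_lt_one (Real.exp_pos _).le hc1).tsum_ofReal_ne_top
      (ENNReal.tsum_le_tsum hle)
  filter_upwards [ae_eventually_notMem hsum] with ω hω
  filter_upwards [hω] with n hn
  simp only [not_le, S, Finset.sum_sub_distrib] at hn
  linarith

end Cylinders

end LocalEntropy

namespace LocalEntropy

/-! ### Codes and their predictors -/

section Codes

variable {A Y : Type*}

/-- The sequences whose codes `c 0, …, c n` agree with those of `ω`. -/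
def cls (c : ℕ → (ℕ → A) → Y) (n : ℕ) (ω : ℕ → A) : Set (ℕ → A) :=
  {x | ∀ i ≤ n, c i x = c i ω}

lemma cls_succ (c : ℕ → (ℕ → A) → Y) (n : ℕ) (ω : ℕ → A) :
    cls c (n + 1) ω = cls c n ω ∩ c (n + 1) ⁻¹' {c (n + 1) ω} := by
  ext x
  constructor
  · exact fun h => ⟨fun i hi => h i (by omega), h _ le_rfl⟩
  · rintro ⟨h1, h2⟩ i hi
    rcases Nat.lt_or_ge n i with h | h
    · obtain rfl : i = n + 1 := by omega
      exact h2
    · exact h1 i h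

lemma cls_eq_of_mem {c : ℕ → (ℕ → A) → Y} {n : ℕ} {ω ω' : ℕ → A} (h : ω' ∈ cls c n ω) :
    cls c n ω' = cls c n ω := by
  ext x
  exact ⟨fun hx i hi => (hx i hi).trans (h i hi), fun hx i hi => (hx i hi).trans (h i hi).symm⟩

lemma cyl_subset_cls {c : ℕ → (ℕ → A) → Y} (hc : ∀ j, Dep j (c j)) (n : ℕ) (ω : ℕ → A) :
    cyl n ω ⊆ cls c n ω :=
  fun x hx i hi => hc i ω x (cyl_anti hi ω hx)

variable [Fintype A] [Nonempty A] [MeasurableSpace A] [MeasurableSingletonClass A]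

lemma Dep.measurableSet_preimage {n : ℕ} {f : (ℕ → A) → Y} (hf : Dep n f) (s : Set Y) :
    MeasurableSet (f ⁻¹' s) :=
  @Dep.measurable A _ _ _ _ Y ⊤ n f hf s trivial

lemma dep_cls {c : ℕ → (ℕ → A) → Y} (hc : ∀ j, Dep j (c j)) (n : ℕ) : Dep n (cls c n) :=
  fun ω _ h => cls_eq_of_mem (cyl_subset_cls hc n ω h)

lemma measurableSet_cls {c : ℕ → (ℕ → A) → Y} (hc : ∀ j, Dep j (c j)) (n : ℕ) (ω : ℕ → A) :
    MeasurableSet (cls c n ω) := by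
  have : cls c n ω = ⋂ i ∈ Finset.range (n + 1), c i ⁻¹' {c i ω} := by
    ext x
    simp [cls]
  rw [this]
  exact Finset.measurableSet_biInter _ fun i _ => (hc i).measurableSet_preimage _

/-- A prediction for the code `c (j + 1)`, given the first `j` letters of `ω`: the average of the
conditional law given the codes up to `j` and of the conditional law given the letters up to `j`.
The second one only serves to bound the prediction from below at the code which occurs. -/
noncomputable def pr (η : Measure (ℕ → A)) (c : ℕ → (ℕ → A) → Y) (j : ℕ) (ω : ℕ → A) (z : Y) : ℝ :=
  (η.real (cls c j ω ∩ c (j + 1) ⁻¹' {z}) / η.real (cls c j ω)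
    + η.real (cyl j ω ∩ c (j + 1) ⁻¹' {z}) / η.real (cyl j ω)) / 2

/-- The information of the code `c (j + 1)` with respect to its prediction. -/
noncomputable def info (η : Measure (ℕ → A)) (c : ℕ → (ℕ → A) → Y) (j : ℕ) (ω : ℕ → A) : ℝ :=
  -Real.log (pr η c j ω (c (j + 1) ω))

variable {η : Measure (ℕ → A)} [IsProbabilityMeasure η] {c : ℕ → (ℕ → A) → Y}

lemma dep_pr (hc : ∀ j, Dep j (c j)) (j : ℕ) : Dep j (pr η c j) := by
  intro ω ω' h
  funext z
  simp only [pr, cyl_eq_of_mem h, dep_cls hc j ω ω' h]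

lemma dep_info (hc : ∀ j, Dep j (c j)) (j : ℕ) : Dep (j + 1) (info η c j) := by
  intro ω ω' h
  simp only [info, hc _ ω ω' h, (dep_pr (η := η) hc j).mono (Nat.le_succ j) ω ω' h]

lemma pr_nonneg (j : ℕ) (ω : ℕ → A) (z : Y) : 0 ≤ pr η c j ω z := by
  unfold pr; positivity

lemma pr_le_one (j : ℕ) (ω : ℕ → A) (z : Y) : pr η c j ω z ≤ 1 := by
  have h1 : η.real (cls c j ω ∩ c (j + 1) ⁻¹' {z}) / η.real (cls c j ω) ≤ 1 :=
    div_le_one_of_le₀ (measureReal_mono inter_subset_left) measureReal_nonneg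
  have h2 : η.real (cyl j ω ∩ c (j + 1) ⁻¹' {z}) / η.real (cyl j ω) ≤ 1 :=
    div_le_one_of_le₀ (measureReal_mono inter_subset_left) measureReal_nonneg
  unfold pr; linarith

lemma info_nonneg (j : ℕ) (ω : ℕ → A) : 0 ≤ info η c j ω :=
  neg_nonneg.mpr (Real.log_nonpos (pr_nonneg _ _ _) (pr_le_one _ _ _))

lemma le_pr (hc : ∀ j, Dep j (c j)) (hpos : ∀ j ω, 0 < η.real (cyl j ω)) {δ : ℝ}
    (hδ : ∀ j ω, δ * η.real (cyl j ω) ≤ η.real (cyl (j + 1) ω)) (j : ℕ) (ω : ℕ → A) :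
    δ / 2 ≤ pr η c j ω (c (j + 1) ω) := by
  have h1 : δ ≤ η.real (cyl j ω ∩ c (j + 1) ⁻¹' {c (j + 1) ω}) / η.real (cyl j ω) := by
    rw [le_div_iff₀ (hpos j ω)]
    refine (hδ j ω).trans (measureReal_mono ?_)
    exact fun x hx => ⟨cyl_anti (Nat.le_succ j) ω hx, hc _ ω x hx⟩
  have h2 : 0 ≤ η.real (cls c j ω ∩ c (j + 1) ⁻¹' {c (j + 1) ω}) / η.real (cls c j ω) := by
    positivity
  unfold pr; linarith

lemma info_le (hc : ∀ j, Dep j (c j)) (hpos : ∀ j ω, 0 < η.real (cyl j ω)) {δ : ℝ} (hδ0 : 0 < δ)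
    (hδ : ∀ j ω, δ * η.real (cyl j ω) ≤ η.real (cyl (j + 1) ω)) (j : ℕ) (ω : ℕ → A) :
    info η c j ω ≤ -Real.log (δ / 2) :=
  neg_le_neg (Real.log_le_log (by positivity) (le_pr hc hpos hδ j ω))

/-- The conditional laws given the codes multiply up to the measure of a code class, so the total
information bounds the measure of the class, up to the factor `2` lost at each step by averaging
the two predictions. -/
lemma sum_info_le (hc : ∀ j, Dep j (c j)) (hpos : ∀ j ω, 0 < η.real (cyl j ω)) (n : ℕ)
    (ω : ℕ → A) :
    ∑ j ∈ Finset.range n, info η c j ω ≤ n * Real.log 2 - Real.log (η.real (cls c n ω)) := by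
  have hcls : ∀ j, 0 < η.real (cls c j ω) := fun j =>
    (hpos j ω).trans_le (measureReal_mono (cyl_subset_cls hc j ω))
  induction n with
  | zero =>
    have := Real.log_nonpos (measureReal_nonneg (μ := η) (s := cls c 0 ω)) measureReal_le_one
    simpa using this
  | succ n ih =>
    rw [Finset.sum_range_succ]
    have h1 : η.real (cls c (n + 1) ω) / η.real (cls c n ω) / 2
        ≤ pr η c n ω (c (n + 1) ω) := by
      rw [cls_succ, pr]
      gcongr
      exact le_add_of_nonneg_right (by positivity)
    have h2 := Real.log_le_log (div_pos (div_pos (hcls (n + 1)) (hcls n)) two_pos) h1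
    rw [Real.log_div (div_pos (hcls (n + 1)) (hcls n)).ne' two_ne_zero,
      Real.log_div (hcls _).ne' (hcls _).ne'] at h2
    have h3 : info η c n ω = -Real.log (pr η c n ω (c (n + 1) ω)) := rfl
    push_cast
    linarith

lemma sum_inter_div_le (D : Set (ℕ → A)) {g : (ℕ → A) → Y}
    (hg : ∀ z, MeasurableSet (g ⁻¹' {z})) (S : Finset Y) :
    ∑ z ∈ S, η.real (D ∩ g ⁻¹' {z}) / η.real D ≤ 1 := by
  rw [← Finset.sum_div]
  refine div_le_one_of_le₀ ?_ measureReal_nonneg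
  have h1 : ∀ z, η.real (D ∩ g ⁻¹' {z}) = (η.restrict D).real (g ⁻¹' {z}) := fun z => by
    rw [measureReal_restrict_apply (hg z), inter_comm]
  simp_rw [h1]
  rw [sum_measureReal_preimage_singleton S (fun z _ => hg z)]
  refine (measureReal_mono (subset_univ _)).trans ?_
  simp

lemma sum_pr_le (hc : ∀ j, Dep j (c j)) (j : ℕ) (ω : ℕ → A) (S : Finset Y) :
    ∑ z ∈ S, pr η c j ω z ≤ 1 := by
  have hm := fun z => (hc (j + 1)).measurableSet_preimage {z}
  have h1 := sum_inter_div_le (η := η) (cls c j ω) hm S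
  have h2 := sum_inter_div_le (η := η) (cyl j ω) hm S
  simp only [pr, ← Finset.sum_div, Finset.sum_add_distrib] at *
  linarith

lemma negMulLog_le {p r : ℝ} (hp : 0 < p) (hr : 0 < r) :
    Real.negMulLog p ≤ p * -Real.log r + r := by
  have h1 := Real.log_le_sub_one_of_pos (div_pos hr hp)
  rw [Real.log_div hr.ne' hp.ne'] at h1
  have h2 := mul_le_mul_of_nonneg_left h1 hp.le
  have h3 : p * (r / p - 1) = r - p := by field_simp
  rw [h3] at h2
  rw [Real.negMulLog]
  nlinarith

/-- Gibbs' inequality: on a cylinder, the entropy of a function `g` which differs from the next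
code by one of finitely many shifts is bounded by the mean information of that code. The
predictions, summed over the shifts, serve as the comparison weights. -/
lemma entropy_le [AddCommGroup Y] (hc : ∀ j, Dep j (c j)) (hpos : ∀ j ω, 0 < η.real (cyl j ω))
    {δ : ℝ} (hδ0 : 0 < δ) (hδ : ∀ j ω, δ * η.real (cyl j ω) ≤ η.real (cyl (j + 1) ω))
    (j : ℕ) (ω : ℕ → A) {g : (ℕ → A) → Y} (hg : ∀ z, MeasurableSet (g ⁻¹' {z}))
    (Δ : Finset Y) (hΔ : ∀ x, c (j + 1) x - g x ∈ Δ) (S : Finset Y) :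
    ∑ z ∈ S, Real.negMulLog (η.real (cyl j ω ∩ g ⁻¹' {z}) / η.real (cyl j ω))
      ≤ cmean η j (info η c j) ω + Δ.card := by
  classical
  set D := cyl j ω with hD
  have hDm : MeasurableSet D := measurableSet_cyl j ω
  set R : Y → ℝ := fun z => ∑ a ∈ Δ, pr η c j ω (z + a) with hR
  have hR0 : ∀ z, 0 ≤ R z := fun z => Finset.sum_nonneg fun _ _ => pr_nonneg _ _ _
  have hRsum : ∑ z ∈ S, R z ≤ Δ.card := by
    rw [hR, Finset.sum_comm]
    calc _ ≤ ∑ a ∈ Δ, (1 : ℝ) := by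
          refine Finset.sum_le_sum fun a _ => ?_
          have := sum_pr_le (η := η) hc j ω (S.map (addRightEmbedding a))
          simpa using this
      _ = _ := by simp
  have hint : Integrable (info η c j) η := (dep_info hc j).integrable η
  have hpt : ∀ z, ∀ x ∈ D ∩ g ⁻¹' {z}, pr η c j x (c (j + 1) x) ≤ R z := by
    intro z x hx
    obtain ⟨hxD, rfl⟩ := hx
    have h1 : pr η c j x (c (j + 1) x) = pr η c j ω (g x + (c (j + 1) x - g x)) := by
      rw [dep_pr hc j ω x hxD]; congr 1; abel
    rw [h1]
    exact Finset.single_le_sum (f := fun a => pr η c j ω (g x + a))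
      (fun _ _ => pr_nonneg _ _ _) (hΔ x)
  have hterm : ∀ z ∈ S, Real.negMulLog (η.real (D ∩ g ⁻¹' {z}) / η.real D)
      ≤ (η.real D)⁻¹ * ∫ x in D ∩ g ⁻¹' {z}, info η c j x ∂η + R z := by
    intro z _
    have hI0 : 0 ≤ ∫ x in D ∩ g ⁻¹' {z}, info η c j x ∂η :=
      integral_nonneg fun x => info_nonneg j x
    rcases (measureReal_nonneg (μ := η) (s := D ∩ g ⁻¹' {z})).eq_or_lt with h0 | h0
    · rw [← h0, zero_div, Real.negMulLog_zero]
      have := hR0 z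
      have := hpos j ω
      positivity
    · obtain ⟨x, hx⟩ : (D ∩ g ⁻¹' {z}).Nonempty := by
        by_contra hne
        rw [not_nonempty_iff_eq_empty] at hne
        simp [hne] at h0
      have hprpos : ∀ x, 0 < pr η c j x (c (j + 1) x) := fun x =>
        (half_pos hδ0).trans_le (le_pr hc hpos hδ j x)
      have hRpos : 0 < R z := (hprpos x).trans_le (hpt z x hx)
      refine (negMulLog_le (div_pos h0 (hpos j ω)) hRpos).trans ?_
      refine add_le_add ?_ le_rfl
      have hmono : ∫ x in D ∩ g ⁻¹' {z}, -Real.log (R z) ∂η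
          ≤ ∫ x in D ∩ g ⁻¹' {z}, info η c j x ∂η := by
        refine setIntegral_mono_on (integrable_const _) hint.integrableOn
          (hDm.inter (hg z)) fun y hy => ?_
        exact neg_le_neg (Real.log_le_log (hprpos y) (hpt z y hy))
      rw [setIntegral_const, smul_eq_mul] at hmono
      calc _ = (η.real D)⁻¹ * (η.real (D ∩ g ⁻¹' {z}) * -Real.log (R z)) := by
            rw [div_eq_inv_mul, mul_assoc]
        _ ≤ _ := mul_le_mul_of_nonneg_left hmono (inv_nonneg.mpr measureReal_nonneg)
  refine (Finset.sum_le_sum hterm).trans ?_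
  rw [Finset.sum_add_distrib, ← Finset.mul_sum]
  refine add_le_add ?_ hRsum
  rw [cmean]
  gcongr
  rw [← integral_biUnion_finset S (fun z _ => hDm.inter (hg z)) _ (fun z _ => hint.integrableOn)]
  · refine setIntegral_mono_set hint.integrableOn
      (Filter.Eventually.of_forall fun x => info_nonneg j x) ?_
    exact (iUnion₂_subset fun z _ => inter_subset_left).eventuallyLE
  · intro z _ w _ hzw
    rw [Function.onFun, Set.disjoint_left]
    rintro x ⟨_, hx⟩ ⟨_, hx'⟩
    exact hzw (hx.symm.trans hx')

end Codes

end LocalEntropy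

namespace LocalEntropy

/-! ### Mass distribution and grid codes -/

section Geometry

/-- The mass distribution principle along the scales `ρ ^ n`. -/
lemma le_dimH_of_mass {E : Type*} [EMetricSpace E] [MeasurableSpace E] [BorelSpace E]
    (μ : Measure E) {ρ s : ℝ} (hρ0 : 0 < ρ) (hρ1 : ρ < 1) (hs : 0 < s) {K : ℝ≥0∞} (hK0 : K ≠ 0)
    (hK : K ≠ ∞) (n₀ : ℕ)
    (h : ∀ n ≥ n₀, ∀ U : Set E, ediam U ≤ ENNReal.ofReal (ρ ^ n) →
      μ U ≤ K * ENNReal.ofReal ((ρ ^ n) ^ s))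
    {S : Set E} (hS : 0 < μ S) : ENNReal.ofReal s ≤ dimH S := by
  set K' : ℝ≥0∞ := K * ENNReal.ofReal (ρ ^ (-s)) with hK'
  have hρs : 0 < ρ ^ (-s) := Real.rpow_pos_of_pos hρ0 _
  have hK'0 : K' ≠ 0 := mul_ne_zero hK0 (by simpa using hρs)
  have hK't : K' ≠ ∞ := ENNReal.mul_ne_top hK ENNReal.ofReal_ne_top
  have hle : K'⁻¹ • μ ≤ Measure.hausdorffMeasure s := by
    refine Measure.le_hausdorffMeasure s _ (ENNReal.ofReal (ρ ^ n₀))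
      (by simpa using pow_pos hρ0 n₀) fun U hU => ?_
    rw [Measure.smul_apply, smul_eq_mul, mul_comm, ← div_eq_mul_inv]
    refine ENNReal.div_le_of_le_mul' ?_
    have hUt : ediam U ≠ ∞ := ne_top_of_le_ne_top ENNReal.ofReal_ne_top hU
    rcases eq_or_ne (ediam U) 0 with h0 | h0
    · have hlim : Tendsto (fun n : ℕ => K * ENNReal.ofReal ((ρ ^ n) ^ s)) atTop (𝓝 0) := by
        have h1 : Tendsto (fun n : ℕ => (ρ ^ n) ^ s) atTop (𝓝 0) := by
          have := (tendsto_pow_atTop_nhds_zero_of_lt_one hρ0.le hρ1).rpow_const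
            (p := s) (Or.inr hs.le)
          rwa [Real.zero_rpow hs.ne'] at this
        have h2 := ENNReal.Tendsto.const_mul (a := K) (ENNReal.tendsto_ofReal h1) (Or.inr hK)
        simpa using h2
      have : μ U ≤ 0 := by
        refine ge_of_tendsto hlim ?_
        filter_upwards [eventually_ge_atTop n₀] with n hn
        exact h n hn U (by simp [h0])
      exact this.trans zero_le
    · have hd0 : 0 < (ediam U).toReal := ENNReal.toReal_pos h0 hUt
      have hdn : (ediam U).toReal ≤ ρ ^ n₀ := ENNReal.toReal_le_of_le_ofReal (by positivity) hU
      obtain ⟨n, hn1, hn2⟩ := exists_nat_pow_near_of_lt_one hd0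
        (hdn.trans (pow_le_one₀ hρ0.le hρ1.le)) hρ0 hρ1
      have hn : n₀ ≤ n := by
        by_contra hlt
        have := pow_le_pow_of_le_one hρ0.le hρ1.le (show n + 1 ≤ n₀ by omega)
        linarith
      have hUe : ediam U = ENNReal.ofReal (ediam U).toReal := (ENNReal.ofReal_toReal hUt).symm
      refine (h n hn U (by rw [hUe]; exact ENNReal.ofReal_le_ofReal hn2)).trans ?_
      rw [hK', mul_assoc]
      gcongr
      rw [hUe, ENNReal.ofReal_rpow_of_pos hd0, ← ENNReal.ofReal_mul hρs.le]
      refine ENNReal.ofReal_le_ofReal ?_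
      calc (ρ ^ n) ^ s = ρ ^ (-s) * (ρ ^ (n + 1)) ^ s := by
            rw [pow_succ, Real.mul_rpow (by positivity) hρ0.le, Real.rpow_neg hρ0.le]
            have := (Real.rpow_pos_of_pos hρ0 s).ne'
            field_simp
        _ ≤ _ := by gcongr
  have hne : Measure.hausdorffMeasure s S ≠ 0 := by
    intro h0
    have h1 := hle S
    rw [h0, Measure.smul_apply, smul_eq_mul, nonpos_iff_eq_zero, mul_eq_zero] at h1
    rcases h1 with h1 | h1
    · exact hK't (ENNReal.inv_eq_zero.mp h1)
    · exact hS.ne' h1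
  have hs' : ((s.toNNReal : NNReal) : ℝ) = s := Real.coe_toNNReal s hs.le
  rw [← hs'] at hne
  exact le_dimH_of_hausdorffMeasure_ne_zero hne

/-- The index of the grid cube of side length `r` containing `v`. -/
noncomputable def gidx {k : ℕ} (r : ℝ) (v : Fin k → ℝ) : Fin k → ℤ := fun i => ⌊v i / r⌋

lemma floor_sub_le {r x y : ℝ} (hr : 0 < r) (h : |x - y| ≤ r) : |⌊x / r⌋ - ⌊y / r⌋| ≤ 1 := by
  have h1 : |x / r - y / r| ≤ 1 := by
    rw [← sub_div, abs_div, abs_of_pos hr, div_le_one hr]; exact h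
  obtain ⟨h2, h3⟩ := abs_le.mp h1
  have hx := Int.floor_le (x / r)
  have hx' := Int.lt_floor_add_one (x / r)
  have hy := Int.floor_le (y / r)
  have hy' := Int.lt_floor_add_one (y / r)
  have a1 : ⌊x / r⌋ - ⌊y / r⌋ < 2 := by
    rw [← Int.cast_lt (R := ℝ)]; push_cast; linarith
  have a2 : -2 < ⌊x / r⌋ - ⌊y / r⌋ := by
    rw [← Int.cast_lt (R := ℝ)]; push_cast; linarith
  rw [abs_le]; omega

variable {A : Type*} [Fintype A] [Nonempty A] [MeasurableSpace A] [MeasurableSingletonClass A]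
variable {E : Type*} [MetricSpace E] {k : ℕ}

/-- The code of level `j`: the grid cube of side length `ρ ^ j` containing the image of a fixed
representative of the cylinder of length `j`. Unlike the cube containing the image of `ω`, it is a
function of the first `j` letters of `ω`. -/
noncomputable def code (φ : E → Fin k → ℝ) (F : (ℕ → A) → E) (ρ : ℝ) (j : ℕ) (ω : ℕ → A) :
    Fin k → ℤ :=
  gidx (ρ ^ j) (φ (F (rep j ω)))

lemma dep_code (φ : E → Fin k → ℝ) (F : (ℕ → A) → E) (ρ : ℝ) (j : ℕ) : Dep j (code φ F ρ j) := by
  intro ω ω' h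
  simp only [code, dep_rep j ω ω' h]

variable {φ : E → Fin k → ℝ} {F : (ℕ → A) → E} {ρ : ℝ}

lemma code_sub_gidx (hφ : ∀ a b i, |φ a i - φ b i| ≤ dist a b) (hρ0 : 0 < ρ)
    (hF : ∀ (x y : ℕ → A) (m : ℕ), (∀ i < m, x i = y i) → dist (F x) (F y) ≤ ρ ^ m)
    (j : ℕ) (ω : ℕ → A) (i : Fin k) :
    |code φ F ρ j ω i - gidx (ρ ^ j) (φ (F ω)) i| ≤ 1 :=
  floor_sub_le (pow_pos hρ0 j) ((hφ _ _ i).trans (hF _ _ j (rep_mem_cyl j ω)))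

/-- The points mapped into a set of diameter at most `ρ ^ n` have at most `5 ^ k` different codes at
each of the levels `0, …, n`, which bounds the mass of its preimage inside a set of points with small code classes. -/
lemma measure_preimage_le (hφ : ∀ a b i, |φ a i - φ b i| ≤ dist a b) (hρ0 : 0 < ρ) (hρ1 : ρ < 1)
    (hF : ∀ (x y : ℕ → A) (m : ℕ), (∀ i < m, x i = y i) → dist (F x) (F y) ≤ ρ ^ m)
    (η : Measure (ℕ → A)) (n : ℕ) (U : Set E) (hU : ∀ a ∈ U, ∀ b ∈ U, dist a b ≤ ρ ^ n)
    (G : Set (ℕ → A)) (M : ℝ≥0∞) (hG : ∀ ω ∈ G, η (cls (code φ F ρ) n ω) ≤ M) :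
    η (F ⁻¹' U ∩ G) ≤ (5 ^ k) ^ (n + 1) * M := by
  classical
  rcases (F ⁻¹' U ∩ G).eq_empty_or_nonempty with he | ⟨ω₀, hω₀⟩
  · simp [he]
  set b : ℕ → Fin k → ℤ := fun j => gidx (ρ ^ j) (φ (F ω₀))
  set Γ : Finset (Fin (n + 1) → Fin k → ℤ) := Fintype.piFinset fun j =>
    Fintype.piFinset fun i => Finset.Icc (b j i - 2) (b j i + 2) with hΓ
  have hcard : Γ.card = (5 ^ k) ^ (n + 1) := by
    rw [hΓ, Fintype.card_piFinset]
    have : ∀ j : Fin (n + 1), (Fintype.piFinset fun i =>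
        Finset.Icc (b j i - 2) (b j i + 2)).card = 5 ^ k := by
      intro j
      rw [Fintype.card_piFinset]
      have h5 : ∀ i, (Finset.Icc (b j i - 2) (b j i + 2)).card = 5 := by
        intro i; rw [Int.card_Icc]; omega
      simp [h5]
    simp [this]
  have hsub : F ⁻¹' U ∩ G ⊆ ⋃ γ ∈ Γ,
      ({x | ∀ j : Fin (n + 1), code φ F ρ j x = γ j} ∩ (F ⁻¹' U ∩ G)) := by
    intro x hx
    refine mem_iUnion₂.mpr ⟨fun j => code φ F ρ j x, ?_, fun _ => rfl, hx⟩
    rw [hΓ]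
    simp only [Fintype.mem_piFinset, Finset.mem_Icc]
    intro j i
    have h1 := abs_le.mp (code_sub_gidx hφ hρ0 hF j x i)
    have h2 : |gidx (ρ ^ (j : ℕ)) (φ (F x)) i - b j i| ≤ 1 :=
      floor_sub_le (pow_pos hρ0 j) ((hφ _ _ i).trans ((hU _ hx.1 _ hω₀.1).trans
        (pow_le_pow_of_le_one hρ0.le hρ1.le (Nat.lt_succ_iff.mp j.2))))
    have h3 := abs_le.mp h2
    omega
  calc η (F ⁻¹' U ∩ G) ≤ ∑ γ ∈ Γ, η ({x | ∀ j : Fin (n + 1), code φ F ρ j x = γ j}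
        ∩ (F ⁻¹' U ∩ G)) := (measure_mono hsub).trans (measure_biUnion_finset_le _ _)
    _ ≤ ∑ γ ∈ Γ, M := by
        refine Finset.sum_le_sum fun γ _ => ?_
        rcases ({x | ∀ j : Fin (n + 1), code φ F ρ j x = γ j}
          ∩ (F ⁻¹' U ∩ G)).eq_empty_or_nonempty with he | ⟨x, hx⟩
        · simp [he]
        · refine (measure_mono ?_).trans (hG x hx.2.2)
          intro y hy i hi
          have e1 : code φ F ρ i y = γ ⟨i, Nat.lt_succ_iff.mpr hi⟩ := hy.1 ⟨i, _⟩
          have e2 : code φ F ρ i x = γ ⟨i, Nat.lt_succ_iff.mpr hi⟩ := hx.1 ⟨i, _⟩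
          exact e1.trans e2.symm
    _ = _ := by simp [hcard]

lemma measurable_of_modulus [MeasurableSpace E] [BorelSpace E] (hρ0 : 0 < ρ) (hρ1 : ρ < 1)
    (hF : ∀ (x y : ℕ → A) (m : ℕ), (∀ i < m, x i = y i) → dist (F x) (F y) ≤ ρ ^ m) :
    Measurable F := by
  refine measurable_of_tendsto_metrizable (f := fun n ω => F (rep n ω)) (fun n => ?_) ?_
  · refine Dep.measurable (n := n) ?_
    intro ω ω' h
    simp only [dep_rep n ω ω' h]
  · rw [tendsto_pi_nhds]
    intro ω
    rw [tendsto_iff_dist_tendsto_zero]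
    exact squeeze_zero (fun _ => dist_nonneg) (fun n => hF _ _ n (rep_mem_cyl n ω))
      (tendsto_pow_atTop_nhds_zero_of_lt_one hρ0.le hρ1)

/-- If almost every point has code classes of exponentially small measure, then the image measure
has large dimension; the branching `5 ^ k` of the codes costs `k log 5 / log (1 / ρ)`. -/
lemma le_dimMeas [MeasurableSpace E] [BorelSpace E]
    (hφ : ∀ a b i, |φ a i - φ b i| ≤ dist a b) (hρ0 : 0 < ρ) (hρ1 : ρ < 1)
    (hF : ∀ (x y : ℕ → A) (m : ℕ), (∀ i < m, x i = y i) → dist (F x) (F y) ≤ ρ ^ m)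
    (η : Measure (ℕ → A)) [IsProbabilityMeasure η] {β s : ℝ} (hs : 0 < s)
    (hβ : β = s * Real.log (1 / ρ) + k * Real.log 5)
    (h : ∀ᵐ ω ∂η, ∀ᶠ n : ℕ in atTop, η.real (cls (code φ F ρ) n ω) ≤ Real.exp (-(n * β))) :
    ENNReal.ofReal s ≤ dimMeas (η.map F) := by
  have hFm : Measurable F := measurable_of_modulus hρ0 hρ1 hF
  refine le_iInf fun S => le_iInf fun hS => le_iInf fun hpos => ?_
  rw [Measure.map_apply hFm hS] at hpos
  set G : ℕ → Set (ℕ → A) := fun m =>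
    {ω | ∀ n ≥ m, η.real (cls (code φ F ρ) n ω) ≤ Real.exp (-(n * β))} with hGdef
  have hGm : ∀ m, MeasurableSet (G m) := by
    intro m
    have : G m = ⋂ n, ⋂ (_ : n ≥ m),
        (fun ω => η.real (cls (code φ F ρ) n ω)) ⁻¹' Iic (Real.exp (-(n * β))) := by
      ext x; simp [hGdef]
    rw [this]
    refine MeasurableSet.iInter fun n => MeasurableSet.iInter fun _ => ?_
    refine Dep.measurableSet_preimage (n := n) ?_ _
    intro ω ω' hω
    simp only [dep_cls (dep_code φ F ρ) n ω ω' hω]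
  obtain ⟨m, hm⟩ : ∃ m, 0 < η (F ⁻¹' S ∩ G m) := by
    refine exists_measure_pos_of_not_measure_iUnion_null fun h0 => hpos.ne' ?_
    refine measure_mono_null_ae ?_ h0
    filter_upwards [h] with ω hω hωS
    obtain ⟨m, hm⟩ := eventually_atTop.mp hω
    exact mem_iUnion.mpr ⟨m, hωS, hm⟩
  refine le_dimH_of_mass ((η.restrict (G m)).map F) hρ0 hρ1 hs (K := 5 ^ k) (by simp)
    (by finiteness) m (fun n hn U hU => ?_) ?_
  · calc _ ≤ (η.restrict (G m)).map F (closure U) := measure_mono subset_closure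
      _ = η (F ⁻¹' closure U ∩ G m) := by
          rw [Measure.map_apply hFm isClosed_closure.measurableSet,
            Measure.restrict_apply (hFm isClosed_closure.measurableSet)]
      _ ≤ (5 ^ k) ^ (n + 1) * ENNReal.ofReal (Real.exp (-(n * β))) := by
          refine measure_preimage_le hφ hρ0 hρ1 hF η n _ ?_ _ _ ?_
          · intro a ha b hb
            have := (Metric.edist_le_ediam_of_mem ha hb).trans
              ((Metric.ediam_closure U).trans_le hU)
            rw [edist_dist] at this
            exact (ENNReal.ofReal_le_ofReal_iff (by positivity)).mp this
          · intro ω hω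
            rw [← ofReal_measureReal]
            exact ENNReal.ofReal_le_ofReal (hω n hn)
      _ = 5 ^ k * ENNReal.ofReal ((5 ^ k) ^ n * Real.exp (-(n * β))) := by
          rw [ENNReal.ofReal_mul (by positivity), ENNReal.ofReal_pow (by positivity),
            ENNReal.ofReal_pow (by positivity), ENNReal.ofReal_ofNat, pow_succ]
          ring
      _ = _ := by
          congr 2
          have h5 : (5 : ℝ) ^ k = Real.exp (k * Real.log 5) := by
            rw [Real.exp_nat_mul, Real.exp_log (by norm_num)]
          have hρn : ρ ^ n = Real.exp (n * Real.log ρ) := by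
            rw [Real.exp_nat_mul, Real.exp_log hρ0]
          rw [h5, ← Real.exp_nat_mul, ← Real.exp_add, hρn, ← Real.exp_mul, hβ, one_div,
            Real.log_inv]
          congr 1; ring
  · rw [Measure.map_apply hFm hS, Measure.restrict_apply (hFm hS)]
    exact hm

end Geometry

end LocalEntropy

namespace LocalEntropy

/-! ### Grid entropies of cylinder measures -/

section Entropy

variable {nA d k : ℕ} {π : Submodule ℝ (EuclideanSpace ℝ (Fin d))}

lemma gridEntropy_eq (e : π ≃ₗᵢ[ℝ] EuclideanSpace ℝ (Fin k)) {r : ℝ} (hr : 0 < r)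
    (η : Measure (ℕ → Fin nA)) (D : Set (ℕ → Fin nA)) {F : (ℕ → Fin nA) → π}
    (hF : Measurable F) :
    gridEntropy π e r (((η D)⁻¹ • η.restrict D).map F) =
      ∑' z : Fin k → ℤ, Real.negMulLog
        (η.real (D ∩ (fun x => gidx r (fun i => e (F x) i)) ⁻¹' {z}) / η.real D) := by
  unfold gridEntropy
  refine tsum_congr fun z => ?_
  have hset : ((⇑e) ⁻¹' {x | ∀ i, x i ∈ Set.Ico (r * (z i : ℝ)) (r * ((z i : ℝ) + 1))})
      = (fun a : π => gidx r (fun i => e a i)) ⁻¹' {z} := by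
    ext a
    simp only [mem_preimage, mem_singleton_iff, funext_iff, gidx, Int.floor_eq_iff,
      le_div_iff₀ hr, div_lt_iff₀ hr, mul_comm r]
    rfl
  have hmeas : MeasurableSet
      ((⇑e) ⁻¹' {x | ∀ i, x i ∈ Set.Ico (r * (z i : ℝ)) (r * ((z i : ℝ) + 1))}) := by
    refine e.continuous.measurable ?_
    have : {x : EuclideanSpace ℝ (Fin k) |
        ∀ i, x i ∈ Set.Ico (r * (z i : ℝ)) (r * ((z i : ℝ) + 1))}
        = ⋂ i, (fun x : EuclideanSpace ℝ (Fin k) => x i) ⁻¹'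
          Set.Ico (r * (z i : ℝ)) (r * ((z i : ℝ) + 1)) := by
      ext x; simp
    rw [this]
    refine MeasurableSet.iInter fun i => ?_
    exact (by fun_prop : Measurable fun x : EuclideanSpace ℝ (Fin k) => x i) measurableSet_Ico
  rw [Measure.map_apply hF hmeas, Measure.smul_apply, Measure.restrict_apply (hF hmeas), hset,
    smul_eq_mul, ENNReal.toReal_mul, ENNReal.toReal_inv, ← preimage_comp, inter_comm,
    div_eq_inv_mul]
  rfl

lemma measurable_gidx (e : π ≃ₗᵢ[ℝ] EuclideanSpace ℝ (Fin k)) (r : ℝ)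
    {F : (ℕ → Fin nA) → π} (hF : Measurable F) :
    Measurable (fun x => gidx r (fun i => e (F x) i)) := by
  refine measurable_pi_lambda _ fun i => Int.measurable_floor.comp (Measurable.div_const ?_ r)
  have h1 : Measurable fun x => e (F x) := e.continuous.measurable.comp hF
  exact (by fun_prop : Measurable fun x : EuclideanSpace ℝ (Fin k) => x i).comp h1

lemma abs_coord_sub_le (e : π ≃ₗᵢ[ℝ] EuclideanSpace ℝ (Fin k)) (a b : π) (i : Fin k) :
    |e a i - e b i| ≤ dist a b := by
  rw [← e.dist_map a b, dist_eq_norm]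
  have := PiLp.norm_apply_le (e a - e b) i
  simpa using this

lemma gridEntropy_nonneg (e : π ≃ₗᵢ[ℝ] EuclideanSpace ℝ (Fin k)) {r : ℝ} (hr : 0 < r)
    (η : Measure (ℕ → Fin nA)) [IsProbabilityMeasure η] (D : Set (ℕ → Fin nA))
    {F : (ℕ → Fin nA) → π} (hF : Measurable F) :
    0 ≤ gridEntropy π e r (((η D)⁻¹ • η.restrict D).map F) := by
  rw [gridEntropy_eq e hr η D hF]
  exact tsum_nonneg fun z => Real.negMulLog_nonneg (by positivity)
    (div_le_one_of_le₀ (measureReal_mono inter_subset_left) measureReal_nonneg)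

/-- The grid entropy at scale `ρ ^ (j + 1)` of the cylinder measure exceeds the mean information
of the next code by at most `3 ^ k`. -/
lemma gridEntropy_le [NeZero nA] (e : π ≃ₗᵢ[ℝ] EuclideanSpace ℝ (Fin k)) {ρ : ℝ} (hρ0 : 0 < ρ)
    {η : Measure (ℕ → Fin nA)} [IsProbabilityMeasure η] {F : (ℕ → Fin nA) → π}
    (hFm : Measurable F)
    (hF : ∀ (x y : ℕ → Fin nA) (m : ℕ), (∀ i < m, x i = y i) → dist (F x) (F y) ≤ ρ ^ m)
    (hpos : ∀ j ω, 0 < η.real (cyl j ω)) {δ : ℝ} (hδ0 : 0 < δ)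
    (hδ : ∀ j ω, δ * η.real (cyl j ω) ≤ η.real (cyl (j + 1) ω)) (j : ℕ) (ω : ℕ → Fin nA) :
    gridEntropy π e (ρ ^ (j + 1)) (((η (cyl j ω))⁻¹ • η.restrict (cyl j ω)).map F)
      ≤ cmean η j (info η (code (fun a i => e a i) F ρ) j) ω + 3 ^ k := by
  rw [gridEntropy_eq e (pow_pos hρ0 _) η _ hFm]
  refine Real.tsum_le_of_sum_le (fun z => Real.negMulLog_nonneg (by positivity)
    (div_le_one_of_le₀ (measureReal_mono inter_subset_left) measureReal_nonneg)) fun S => ?_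
  have hcard : ((Fintype.piFinset fun _ : Fin k => Finset.Icc (-1 : ℤ) 1).card : ℝ) = 3 ^ k := by
    simp
  rw [← hcard]
  refine entropy_le (dep_code _ F ρ) hpos hδ0 hδ j ω
    (fun z => measurable_gidx e _ hFm (measurableSet_singleton z)) _ (fun x => ?_) S
  rw [Fintype.mem_piFinset]
  intro i
  rw [Finset.mem_Icc]
  exact abs_le.mp (code_sub_gidx (φ := fun a i => e a i) (abs_coord_sub_le e) hρ0 hF (j + 1) x i)

end Entropy

end LocalEntropy

open LocalEntropy

theorem stmt13 (k : ℕ) (ρ₀ : ℝ) (hρ₀pos : 0 < ρ₀) (hρ₀lt : ρ₀ < 1) :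
    ∃ C : ℝ, 0 < C ∧
      ∀ (d nA : ℕ)
        -- the Bernoulli measure `η` for a strictly positive probability vector on `Fin nA`
        (p : Fin nA → ℝ) (_ : ∀ a, 0 < p a) (_ : ∑ a, p a = 1)
        (η : Measure (ℕ → Fin nA)) (_ : IsProbabilityMeasure η)
        (_ : ∀ (m : ℕ) (w : Fin m → Fin nA),
          η {ω | ∀ i : Fin m, ω (i : ℕ) = w i} = ∏ i, ENNReal.ofReal (p (w i)))
        (ρ : ℝ) (_ : 0 < ρ) (_ : ρ ≤ ρ₀)
        (π : Submodule ℝ (EuclideanSpace ℝ (Fin d))) (_ : Module.finrank ℝ π = k)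
        (e : π ≃ₗᵢ[ℝ] EuclideanSpace ℝ (Fin k))
        -- `F` is `1`-Lipschitz from `(𝒜^ℕ, d_ρ)` to `π`
        (F : (ℕ → Fin nA) → π)
        (_ : ∀ (x y : ℕ → Fin nA) (m : ℕ), (∀ i < m, x i = y i) →
          dist (F x) (F y) ≤ ρ ^ m)
        (α : ℝ),
        -- local entropy averages are asymptotically at least `α` almost surely
        (∀ᵐ ω ∂η, α ≤ atTop.liminf (fun N : ℕ =>
          (1 / (N : ℝ)) * ∑ j ∈ Finset.Icc 1 N,
            gridEntropy π e (ρ ^ (j + 1))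
              (((η {ω' | ∀ i < j, ω' i = ω i})⁻¹ •
                  η.restrict {ω' | ∀ i < j, ω' i = ω i}).map F) /
              Real.log (1 / ρ))) →
        dimMeas (η.map F) ≥ ENNReal.ofReal (α - C / Real.log (1 / ρ)) := by

  refine ⟨k * Real.log 5 + 3 ^ k + Real.log 2 + 1, by positivity, ?_⟩
  intro d nA p hp hsum η hη hcyl ρ hρ0 hρle π _ e F hF α hα
  have hρ1 : ρ < 1 := hρle.trans_lt hρ₀lt
  set C : ℝ := k * Real.log 5 + 3 ^ k + Real.log 2 + 1 with hC
  set L : ℝ := Real.log (1 / ρ) with hL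
  have hL0 : 0 < L := Real.log_pos (by rw [lt_div_iff₀ hρ0]; linarith)
  rcases le_or_gt (α - C / L) 0 with hs | hs
  · rw [ENNReal.ofReal_of_nonpos hs]; exact zero_le
  have : NeZero nA := ⟨by rintro rfl; simp at hsum⟩
  have hFm : Measurable F := measurable_of_modulus hρ0 hρ1 hF
  have hcylm : ∀ (j : ℕ) (ω : ℕ → Fin nA),
      η.real (cyl j ω) = ∏ i ∈ Finset.range j, p (ω i) := by
    intro j ω
    have h1 := hcyl j (fun i => ω i)
    have h2 : {ω' : ℕ → Fin nA | ∀ i : Fin j, ω' (i : ℕ) = ω i} = cyl j ω := by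
      ext x
      exact ⟨fun h i hi => h ⟨i, hi⟩, fun h i => h i i.2⟩
    rw [h2, ← ENNReal.ofReal_prod_of_nonneg (fun i _ => (hp _).le)] at h1
    rw [measureReal_def, h1, ENNReal.toReal_ofReal (Finset.prod_nonneg fun i _ => (hp _).le),
      Finset.prod_range]
  have hpos : ∀ j ω, 0 < η.real (cyl j ω) := fun j ω => by
    rw [hcylm]; exact Finset.prod_pos fun i _ => hp _
  obtain ⟨a₀, ha₀⟩ := Finite.exists_min p
  have hδ : ∀ j ω, p a₀ * η.real (cyl j ω) ≤ η.real (cyl (j + 1) ω) := by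
    intro j ω
    rw [hcylm, hcylm, Finset.prod_range_succ, mul_comm]
    exact mul_le_mul_of_nonneg_left (ha₀ _) (Finset.prod_nonneg fun i _ => (hp _).le)
  set φ : π → Fin k → ℝ := fun a i => e a i
  set c := code φ F ρ
  have hc : ∀ j, Dep j (c j) := dep_code φ F ρ
  refine le_dimMeas (φ := φ) (abs_coord_sub_le e) hρ0 hρ1 hF η hs rfl ?_
  have hβ : (α - C / L) * Real.log (1 / ρ) + k * Real.log 5
      = α * L - (3 ^ k + Real.log 2 + 1) := by
    rw [← hL, sub_mul, div_mul_cancel₀ _ hL0.ne', hC]; ring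
  rw [hβ]
  set β : ℝ := α * L - (3 ^ k + Real.log 2 + 1) with hβdef
  filter_upwards [hα, ae_sum_ge η hpos (dep_info (η := η) hc) info_nonneg
    (info_le hc hpos (hp a₀) hδ) (show (0 : ℝ) < 1 / 4 by norm_num)] with ω h1 h2
  set H : ℕ → ℝ := fun j => gridEntropy π e (ρ ^ (j + 1))
    (((η (cyl j ω))⁻¹ • η.restrict (cyl j ω)).map F) with hH
  have hH0 : ∀ j, 0 ≤ H j := fun j => gridEntropy_nonneg e (pow_pos hρ0 _) η _ hFm
  have hHle : ∀ j, H j ≤ cmean η j (info η c j) ω + 3 ^ k := fun j =>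
    gridEntropy_le e hρ0 hFm hF hpos (hp a₀) hδ j ω
  have h1' : α ≤ atTop.liminf (fun N : ℕ => (1 / (N : ℝ)) * ∑ j ∈ Finset.Icc 1 N, H j / L) := h1
  have hlt : α - 1 / 4 / L < atTop.liminf
      (fun N : ℕ => (1 / (N : ℝ)) * ∑ j ∈ Finset.Icc 1 N, H j / L) :=
    lt_of_lt_of_le (by have : 0 < 1 / 4 / L := by positivity
                       linarith) h1'
  have hev := eventually_lt_of_lt_liminf hlt ⟨0, by
    refine Filter.eventually_map.mpr (Filter.Eventually.of_forall fun N => ?_)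
    exact mul_nonneg (by positivity)
      (Finset.sum_nonneg fun j _ => div_nonneg (hH0 j) hL0.le)⟩
  -- the entropy average starts at `j = 1`, hence the shift from `n` to `n - 1`
  obtain ⟨N₀, hN₀⟩ := eventually_atTop.mp hev
  obtain ⟨K, hK⟩ := exists_nat_ge (2 * (β + 1 / 4 + Real.log 2))
  filter_upwards [h2, eventually_ge_atTop (N₀ + K + 2)] with n hn hnN
  obtain ⟨N, rfl⟩ : ∃ N, n = N + 1 := ⟨n - 1, by omega⟩
  have hNpos : (0 : ℝ) < N := by exact_mod_cast (show 0 < N by omega)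
  have hKN : (K : ℝ) ≤ N := by exact_mod_cast (show K ≤ N by omega)
  have hsumH : N * (α * L - 1 / 4) ≤ ∑ j ∈ Finset.Icc 1 N, H j := by
    have h3 := (hN₀ N (by omega)).le
    rw [← Finset.sum_div, one_div_mul_eq_div, le_div_iff₀ hNpos, le_div_iff₀ hL0] at h3
    refine le_trans (le_of_eq ?_) h3
    field_simp
  have hmean : ∑ j ∈ Finset.Icc 1 N, H j - N * 3 ^ k
      ≤ ∑ j ∈ Finset.range (N + 1), cmean η j (info η c j) ω := by
    have h0 : 0 ≤ cmean η 0 (info η c 0) ω :=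
      mul_nonneg (by positivity) (integral_nonneg fun x => info_nonneg 0 x)
    have h4 : ∑ j ∈ Finset.Icc 1 N, H j
        ≤ ∑ j ∈ Finset.Icc 1 N, (cmean η j (info η c j) ω + 3 ^ k) :=
      Finset.sum_le_sum fun j _ => hHle j
    rw [Finset.sum_add_distrib, Finset.sum_const, Nat.card_Icc, nsmul_eq_mul,
      Nat.add_sub_cancel] at h4
    have h5 : ∑ j ∈ Finset.range (N + 1), cmean η j (info η c j) ω
        = ∑ j ∈ Finset.Icc 1 N, cmean η j (info η c j) ω + cmean η 0 (info η c 0) ω := by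
      rw [Finset.range_eq_Ico, Finset.sum_eq_sum_Ico_succ_bot (Nat.succ_pos N), add_comm]
      rfl
    linarith
  have htel := sum_info_le (η := η) hc hpos (N + 1) ω
  have hclspos : 0 < η.real (cls c (N + 1) ω) :=
    (hpos (N + 1) ω).trans_le (measureReal_mono (cyl_subset_cls hc (N + 1) ω))
  rw [← Real.log_le_iff_le_exp hclspos]
  push_cast at *
  nlinarith
end

section
/- Let X be a compact metric space and let 𝒫(X) be the space of Borel probability measures on X with the weak* topology. Then the map μ ↦ dim μ, where dim μ = inf{dim_H A : A Borel, μ(A) > 0}, is a Borel measurable function on 𝒫(X). -/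
/-!
The sublevel sets of `μ ↦ dim μ` are Borel because they are countable unions of `Gδ` sets.

Call a set `(s, r)`-small if it has a countable cover by sets of diameter at most `r` whose
`s`-th powers of diameters sum to at most `r`. For `s > 0` and a finite measure `μ`, some Borel set
`A` satisfies `μ A > 0` and `μH[s] A = 0` if and only if there is an `ε > 0` such that for every `n`
some `(s, 2⁻ⁿ)`-small *open* set has `μ`-measure greater than `ε`. In one direction, covers of `A`
are thickened to open covers (`exists_isOpen_smallCover`); in the other, the limsup of the open
sets has measure at least `ε`, and its tails of covers show that it is `μH[s]`-null
(`exists_null_of_smallCover`).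

By the portmanteau theorem `{μ | ε < μ V}` is weak* open for every open `V`, so an arbitrary union
over small open sets `V` is still open. Taking countable unions over rational `s < t` and over
`ε = 1 / (k + 1)`, and the countable intersection over `n`, gives `{μ | dim μ < t}`.
-/

open MeasureTheory Metric Set Filter
open scoped ENNReal Topology

/-- `V` has a countable cover by sets of diameter at most `r`, with the `s`-th powers of the
diameters summing to at most `r`. -/
def SmallCover {X : Type*} [MetricSpace X] (s : ℝ) (r : ℝ≥0∞) (V : Set X) : Prop :=
  ∃ U : ℕ → Set X, V ⊆ ⋃ i, U i ∧ (∀ i, ediam (U i) ≤ r) ∧ ∑' i, ediam (U i) ^ s ≤ r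

theorem exists_isOpen_smallCover {X : Type*} [MetricSpace X] [MeasurableSpace X] [BorelSpace X]
    {s : ℝ} (hs : 0 < s) {A : Set X} (hA : Measure.hausdorffMeasure s A = 0)
    {r : ℝ≥0∞} (hr : 0 < r) (hr' : r ≠ ∞) :
    ∃ V, IsOpen V ∧ A ⊆ V ∧ SmallCover s r V := by
  have hr2 : 0 < r / 2 := ENNReal.half_pos hr.ne'
  have hlt : r / 2 < r := ENNReal.half_lt_self hr.ne' hr'
  rw [Measure.hausdorffMeasure_apply] at hA
  simp only [ENNReal.iSup_eq_zero] at hA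
  have h1 := (hA (r / 2) hr2).trans_lt hr2
  simp only [iInf_lt_iff] at h1
  obtain ⟨t, hAt, htd, hsum⟩ := h1
  have hsum' : ∑' n, ediam (t n) ^ s < r / 2 := by
    refine lt_of_le_of_lt (ENNReal.tsum_le_tsum fun n => ?_) hsum
    rcases (t n).eq_empty_or_nonempty with h | h
    · simp [h, ENNReal.zero_rpow_of_pos hs]
    · simp [h]
  obtain ⟨ε, hε, hεs⟩ := ENNReal.exists_pos_sum_of_countable' hr2.ne' ℕ
  have key : ∀ i, ∃ δ : NNReal, 0 < δ ∧ ediam (t i) + 2 * δ ≤ r ∧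
      (ediam (t i) + 2 * δ) ^ s ≤ ediam (t i) ^ s + ε i := by
    intro i
    have hc : Tendsto (fun δ : NNReal => ediam (t i) + 2 * (δ : ℝ≥0∞)) (𝓝[>] 0)
        (𝓝 (ediam (t i))) := by
      have : Continuous (fun δ : NNReal => ediam (t i) + 2 * (δ : ℝ≥0∞)) :=
        continuous_const.add
          ((ENNReal.continuous_const_mul (by simp)).comp ENNReal.continuous_coe)
      have h := this.tendsto 0
      simp only [ENNReal.coe_zero, mul_zero, add_zero] at h
      exact h.mono_left nhdsWithin_le_nhds
    have hdr : ediam (t i) < r := (htd i).trans_lt hlt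
    have hfin : ediam (t i) ^ s ≠ ∞ := ENNReal.rpow_ne_top_of_nonneg hs.le hdr.ne_top
    have e1 := hc.eventually (gt_mem_nhds hdr)
    have e2 := ((ENNReal.continuous_rpow_const (y := s)).tendsto _ |>.comp hc).eventually
      (gt_mem_nhds (ENNReal.lt_add_right hfin (hε i).ne'))
    obtain ⟨δ, ⟨h1, h2⟩, h3⟩ := ((e1.and e2).and self_mem_nhdsWithin).exists
    exact ⟨δ, h3, h1.le, h2.le⟩
  choose δ hδ hδ1 hδ2 using key
  refine ⟨⋃ i, thickening (δ i) (t i), isOpen_iUnion fun i => isOpen_thickening,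
    hAt.trans (iUnion_mono fun i => self_subset_thickening (by exact_mod_cast hδ i) _),
    fun i => thickening (δ i) (t i), Subset.rfl,
    fun i => (ediam_thickening_le _).trans (hδ1 i), ?_⟩
  calc ∑' i, ediam (thickening (δ i) (t i)) ^ s
      ≤ ∑' i, (ediam (t i) ^ s + ε i) := ENNReal.tsum_le_tsum fun i =>
        (ENNReal.rpow_le_rpow (ediam_thickening_le _) hs.le).trans (hδ2 i)
    _ = ∑' i, ediam (t i) ^ s + ∑' i, ε i := ENNReal.tsum_add
    _ ≤ r / 2 + r / 2 := add_le_add hsum'.le hεs.le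
    _ = r := ENNReal.add_halves r

theorem exists_null_of_smallCover {X : Type*} [MetricSpace X] [MeasurableSpace X] [BorelSpace X]
    (μ : Measure X) [IsFiniteMeasure μ] {s : ℝ} {ε : ℝ≥0∞}
    (h : ∀ n : ℕ, ∃ V, IsOpen V ∧ SmallCover s (2⁻¹ ^ n) V ∧ ε < μ V) :
    ∃ A, MeasurableSet A ∧ ε ≤ μ A ∧ Measure.hausdorffMeasure s A = 0 := by
  choose V hV hU hε using h
  choose U hVU hd hsum using hU
  have hmeas : ∀ N : ℕ, MeasurableSet (⋃ n, V (N + n)) := fun N =>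
    MeasurableSet.iUnion fun n => (hV _).measurableSet
  refine ⟨⋂ N : ℕ, ⋃ n, V (N + n), MeasurableSet.iInter hmeas, ?_, ?_⟩
  · have hanti : Antitone fun N : ℕ => ⋃ n, V (N + n) := by
      intro M N hMN
      refine iUnion_subset fun n => ?_
      obtain ⟨k, rfl⟩ := Nat.exists_eq_add_of_le hMN
      rw [add_assoc]
      exact subset_iUnion (fun n => V (M + n)) (k + n)
    rw [hanti.measure_iInter (fun N => (hmeas N).nullMeasurableSet) ⟨0, measure_ne_top _ _⟩]
    exact le_iInf fun N => (hε N).le.trans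
      (measure_mono (subset_iUnion (fun n => V (N + n)) 0))
  · have hpow : Tendsto (fun N : ℕ => (2⁻¹ : ℝ≥0∞) ^ N) atTop (𝓝 0) :=
      ENNReal.tendsto_pow_atTop_nhds_zero_of_lt_one (by simp)
    have hle := Measure.hausdorffMeasure_le_liminf_tsum (ι := fun _ : ℕ => ℕ × ℕ) s
      (⋂ N : ℕ, ⋃ n, V (N + n)) (l := atTop) (fun N : ℕ => (2⁻¹ : ℝ≥0∞) ^ N) hpow
      (fun N p => U (N + p.1) p.2)
      (Eventually.of_forall fun N p => (hd _ _).trans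
        (pow_le_pow_right_of_le_one' (by simp) (Nat.le_add_right _ _)))
      (Eventually.of_forall fun N x hx => by
        obtain ⟨n, hn⟩ := mem_iUnion.1 (mem_iInter.1 hx N)
        obtain ⟨i, hi⟩ := mem_iUnion.1 (hVU _ hn)
        exact mem_iUnion.2 ⟨(n, i), hi⟩)
    have hbound : ∀ N : ℕ, ∑' p : ℕ × ℕ, ediam (U (N + p.1) p.2) ^ s ≤ 2⁻¹ ^ N * 2 := by
      intro N
      rw [ENNReal.tsum_prod (f := fun n i => ediam (U (N + n) i) ^ s)]
      calc ∑' n, ∑' i, ediam (U (N + n) i) ^ s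
          ≤ ∑' n, 2⁻¹ ^ N * 2⁻¹ ^ n :=
            ENNReal.tsum_le_tsum fun n => (hsum _).trans_eq (pow_add _ _ _)
        _ = 2⁻¹ ^ N * 2 := by
            rw [ENNReal.tsum_mul_left, ENNReal.tsum_geometric, ENNReal.one_sub_inv_two, inv_inv]
    have hlim : Tendsto (fun N : ℕ => ∑' p : ℕ × ℕ, ediam (U (N + p.1) p.2) ^ s) atTop (𝓝 0) := by
      refine tendsto_of_tendsto_of_tendsto_of_le_of_le tendsto_const_nhds ?_
        (fun _ => zero_le) hbound
      simpa using ENNReal.Tendsto.mul_const hpow (b := 2) (Or.inr (by simp))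
    rw [hlim.liminf_eq] at hle
    exact le_antisymm hle zero_le

theorem dimMeas_lt_iff {X : Type*} [MetricSpace X] [MeasurableSpace X] [BorelSpace X]
    (μ : Measure X) [IsFiniteMeasure μ] (t : ℝ≥0∞) :
    dimMeas μ < t ↔ ∃ q : ℚ, (0 < q ∧ (Real.toNNReal q : ℝ≥0∞) < t) ∧ ∃ k : ℕ, ∀ n : ℕ,
      ∃ V : Set X, (IsOpen V ∧ SmallCover (Real.toNNReal q) (2⁻¹ ^ n) V) ∧
        ((k : ℝ≥0∞) + 1)⁻¹ < μ V := by
  constructor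
  · intro h
    simp only [dimMeas, iInf_lt_iff] at h
    obtain ⟨A, hA, hpos, hdim⟩ := h
    obtain ⟨q, -, hq, hqt⟩ := ENNReal.lt_iff_exists_rat_btwn.1 hdim
    have hq0 : 0 < Real.toNNReal q := by exact_mod_cast zero_le.trans_lt hq
    obtain ⟨k, hk⟩ := ENNReal.exists_inv_nat_lt hpos.ne'
    refine ⟨q, ⟨by exact_mod_cast Real.toNNReal_pos.1 hq0, hqt⟩, k, fun n => ?_⟩
    obtain ⟨V, hV, hAV, hc⟩ := exists_isOpen_smallCover (s := Real.toNNReal q)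
      (by exact_mod_cast hq0) (hausdorffMeasure_of_dimH_lt hq)
      (r := 2⁻¹ ^ n) (ENNReal.pow_pos (by simp) n) (ENNReal.pow_ne_top (by simp))
    refine ⟨V, ⟨hV, hc⟩, lt_of_le_of_lt ?_ (hk.trans_le (measure_mono hAV))⟩
    exact ENNReal.inv_le_inv.2 le_self_add
  · rintro ⟨q, ⟨-, hqt⟩, k, h⟩
    obtain ⟨A, hA, hμ, hnull⟩ := exists_null_of_smallCover μ (fun n => by
      obtain ⟨V, ⟨hV, hc⟩, hk⟩ := h n
      exact ⟨V, hV, hc, hk⟩)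
    have hpos : 0 < μ A := lt_of_lt_of_le (ENNReal.inv_pos.2 (by finiteness)) hμ
    refine lt_of_le_of_lt ?_ hqt
    calc dimMeas μ ≤ dimH A := iInf₂_le_of_le A hA (iInf_le _ hpos)
      _ ≤ Real.toNNReal q := dimH_le_of_hausdorffMeasure_ne_top (hnull ▸ ENNReal.zero_ne_top)

/-- Half of the portmanteau theorem, in topological form. -/
theorem isOpen_setOf_lt_measure {X : Type*} [MetricSpace X] [MeasurableSpace X] [BorelSpace X]
    {V : Set X} (hV : IsOpen V) (c : ℝ≥0∞) :
    IsOpen {μ : ProbabilityMeasure X | c < (μ : Measure X) V} := by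
  rw [isOpen_iff_mem_nhds]
  intro μ hμ
  exact eventually_lt_of_lt_liminf (lt_of_lt_of_le hμ
    (ProbabilityMeasure.le_liminf_measure_open_of_tendsto tendsto_id hV))

/-- With respect to the Borel σ-algebra of the weak* topology on the space of Borel
probability measures on a compact metric space, the map `μ ↦ dim μ` is measurable. -/
theorem stmt15 (X : Type*) [MetricSpace X] [CompactSpace X]
    [MeasurableSpace X] [BorelSpace X] :
    @Measurable (ProbabilityMeasure X) ℝ≥0∞ (borel (ProbabilityMeasure X)) _
      (fun μ => dimMeas (μ : Measure X)) := by
  borelize (ProbabilityMeasure X)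
  refine measurable_of_Iio fun t => ?_
  have hset : (fun μ : ProbabilityMeasure X => dimMeas (μ : Measure X)) ⁻¹' Iio t =
      ⋃ (q : ℚ) (_ : 0 < q ∧ (Real.toNNReal q : ℝ≥0∞) < t), ⋃ k : ℕ, ⋂ n : ℕ,
        ⋃ (V : Set X) (_ : IsOpen V ∧ SmallCover (Real.toNNReal q) (2⁻¹ ^ n) V),
          {μ : ProbabilityMeasure X | ((k : ℝ≥0∞) + 1)⁻¹ < (μ : Measure X) V} := by
    ext μ
    simp only [mem_preimage, mem_Iio, dimMeas_lt_iff, mem_iUnion, mem_iInter, mem_ofPred_eq,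
      exists_prop]
  rw [hset]
  refine MeasurableSet.iUnion fun q => MeasurableSet.iUnion fun _ => MeasurableSet.iUnion fun k =>
    MeasurableSet.iInter fun n => IsOpen.measurableSet ?_
  exact isOpen_iUnion fun V => isOpen_iUnion fun hV => isOpen_setOf_lt_measure hV.1 _
end
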